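/- arXiv:1710.05161 — 9 statements merged into one kernel-verified Lean document; each statement's English description precedes it below -/
import Mathlib

section
/- Let C be a coalgebra over a field K and let γ ∈ K. If (C, Q) is a Rota-Baxter coalgebra of weight γ, then both (C, Q, Q + γ·id_C) and (C, Q + γ·id_C, Q) are Rota-Baxter cosystems. -/
open TensorProduct

noncomputable section

variable {K : Type*} [Field K] {C : Type*} [AddCommGroup C] [Module K C]

/-- Coassociativity of a comultiplication (no counit assumed). -/
def Coassoc (Δ : C →ₗ[K] C ⊗[K] C) : Prop :=
  ∀ c : C, (TensorProduct.assoc K C C C) (TensorProduct.map Δ LinearMap.id (Δ c)) =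
    TensorProduct.map LinearMap.id Δ (Δ c)

/-- Rota-Baxter cosystem conditions. -/
def IsRBCosystem (Δ : C →ₗ[K] C ⊗[K] C) (Q T : C →ₗ[K] C) : Prop :=
  (∀ c : C, TensorProduct.map Q Q (Δ c) =
      TensorProduct.map Q LinearMap.id (Δ (Q c)) +
      TensorProduct.map LinearMap.id T (Δ (Q c))) ∧
  (∀ c : C, TensorProduct.map T T (Δ c) =
      TensorProduct.map Q LinearMap.id (Δ (T c)) +
      TensorProduct.map LinearMap.id T (Δ (T c)))

/-- Non-degeneracy of a coalgebra. -/
def Nondegenerate (Δ : C →ₗ[K] C ⊗[K] C) : Prop :=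
  ∀ f : C →ₗ[K] C,
    ((∀ c : C, TensorProduct.map LinearMap.id f (Δ c) = 0) ∨
     (∀ c : C, TensorProduct.map f LinearMap.id (Δ c) = 0)) → f = 0

/-- `pairApply f g (x ⊗ y) = f x * g y`. -/
def pairApply (f g : C →ₗ[K] K) : C ⊗[K] C →ₗ[K] K :=
  TensorProduct.lift ((LinearMap.mul K K).compl₁₂ f g)

/-- Coassociative Yang–Baxter pair. -/
def IsCYBP (Δ : C →ₗ[K] C ⊗[K] C) (σ τ : C →ₗ[K] C →ₗ[K] K) : Prop :=
  (∀ c d e : C, pairApply (σ.flip e) (σ.flip d) (Δ c)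
      - pairApply (σ c) (σ.flip e) (Δ d) + pairApply (τ d) (σ c) (Δ e) = 0) ∧
  (∀ c d e : C, pairApply (τ.flip e) (σ.flip d) (Δ c)
      - pairApply (τ c) (τ.flip e) (Δ d) + pairApply (τ d) (τ c) (Δ e) = 0)

/-- Swap of the first two tensor factors of `C ⊗ (C ⊗ C)`. -/
def swapFirstTwo : C ⊗[K] (C ⊗[K] C) →ₗ[K] C ⊗[K] (C ⊗[K] C) :=
  (TensorProduct.assoc K C C C).toLinearMap ∘ₗ
    LinearMap.rTensor C (TensorProduct.comm K C C).toLinearMap ∘ₗ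
    (TensorProduct.assoc K C C C).symm.toLinearMap

/-- `contract13 σ (x ⊗ (y ⊗ z)) = σ x z • y`. -/
def contract13 (σ : C →ₗ[K] C →ₗ[K] K) : C ⊗[K] (C ⊗[K] C) →ₗ[K] C :=
  (TensorProduct.rid K C).toLinearMap ∘ₗ
    LinearMap.lTensor C (TensorProduct.lift σ) ∘ₗ swapFirstTwo

/-- `muForm Δ σ τ (c ⊗ d) = σ(c₂,d) • c₁ − τ(c,d₁) • d₂`. -/
def muForm (Δ : C →ₗ[K] C ⊗[K] C) (σ τ : C →ₗ[K] C →ₗ[K] K) :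
    C ⊗[K] C →ₗ[K] C :=
  ((TensorProduct.rid K C).toLinearMap ∘ₗ
      LinearMap.lTensor C (TensorProduct.lift σ) ∘ₗ
      (TensorProduct.assoc K C C C).toLinearMap ∘ₗ LinearMap.rTensor C Δ)
  - ((TensorProduct.lid K C).toLinearMap ∘ₗ
      LinearMap.rTensor C (TensorProduct.lift τ) ∘ₗ
      (TensorProduct.assoc K C C C).symm.toLinearMap ∘ₗ LinearMap.lTensor C Δ)

/-- Coderivation condition for a multiplication-like map on a coalgebra. -/
def IsCoderivation (Δ : C →ₗ[K] C ⊗[K] C) (δ : C ⊗[K] C →ₗ[K] C) : Prop :=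
  ∀ c d : C, Δ (δ (c ⊗ₜ d)) =
    LinearMap.lTensor C (δ ∘ₗ (TensorProduct.mk K C C).flip d) (Δ c) +
    LinearMap.rTensor C (δ ∘ₗ TensorProduct.mk K C C c) (Δ d)

/-- Covariant coderivation with respect to `(δ₁, δ₂)`. -/
def IsCovariant (Δ : C →ₗ[K] C ⊗[K] C) (δ₁ δ₂ μ : C ⊗[K] C →ₗ[K] C) : Prop :=
  (∀ c d : C, Δ (μ (c ⊗ₜ d)) =
      LinearMap.rTensor C (μ ∘ₗ TensorProduct.mk K C C c) (Δ d) +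
      LinearMap.lTensor C (δ₁ ∘ₗ (TensorProduct.mk K C C).flip d) (Δ c)) ∧
  (∀ c d : C, Δ (μ (c ⊗ₜ d)) =
      LinearMap.lTensor C (μ ∘ₗ (TensorProduct.mk K C C).flip d) (Δ c) +
      LinearMap.rTensor C (δ₂ ∘ₗ TensorProduct.mk K C C c) (Δ d))

/-- Associativity of a multiplication `μ : C ⊗ C →ₗ C`. -/
def IsAssocMul (μ : C ⊗[K] C →ₗ[K] C) : Prop :=
  ∀ c d e : C, μ (μ (c ⊗ₜ d) ⊗ₜ e) = μ (c ⊗ₜ μ (d ⊗ₜ e))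

/-- Counit condition. -/
def IsCounit (Δ : C →ₗ[K] C ⊗[K] C) (ε : C →ₗ[K] K) : Prop :=
  ∀ c : C, (TensorProduct.lid K C) (TensorProduct.map ε LinearMap.id (Δ c)) = c ∧
    (TensorProduct.rid K C) (TensorProduct.map LinearMap.id ε (Δ c)) = c

/-- Dendriform coalgebra conditions for `(Δr, Δl) = (Δ_≻, Δ_≺)`. -/
def IsDendriformCoalgebra (Δr Δl : C →ₗ[K] C ⊗[K] C) : Prop :=
  (∀ c : C, (TensorProduct.assoc K C C C) (TensorProduct.map Δr LinearMap.id (Δr c)) =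
      TensorProduct.map LinearMap.id Δr (Δr c) + TensorProduct.map LinearMap.id Δl (Δr c)) ∧
  (∀ c : C, (TensorProduct.assoc K C C C) (TensorProduct.map Δl LinearMap.id (Δr c)) =
      TensorProduct.map LinearMap.id Δr (Δl c)) ∧
  (∀ c : C, (TensorProduct.assoc K C C C) (TensorProduct.map Δr LinearMap.id (Δl c)) +
      (TensorProduct.assoc K C C C) (TensorProduct.map Δl LinearMap.id (Δl c)) =
      TensorProduct.map LinearMap.id Δl (Δl c))

/-- The conditions on the bilinear form `u` in Theorem 4.11. -/
def UCond (Δ : C →ₗ[K] C ⊗[K] C) (δ₁ δ₂ : C ⊗[K] C →ₗ[K] C)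
    (u : C →ₗ[K] C →ₗ[K] K) : Prop :=
  (∀ c d : C, δ₁ (c ⊗ₜ d) - δ₂ (c ⊗ₜ d) =
      (TensorProduct.rid K C) (LinearMap.lTensor C (u.flip d) (Δ c)) -
      (TensorProduct.lid K C) (LinearMap.rTensor C (u c) (Δ d))) ∧
  (∀ c d e : C, δ₁ (δ₁ (c ⊗ₜ d) ⊗ₜ e) - δ₁ (c ⊗ₜ δ₁ (d ⊗ₜ e)) =
      (TensorProduct.lid K C)
        (TensorProduct.map (u d) (δ₁ ∘ₗ TensorProduct.mk K C C c) (Δ e))) ∧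
  (∀ c d e : C, u (δ₁ (c ⊗ₜ d)) e - u c (δ₁ (d ⊗ₜ e)) =
      pairApply (u d) (u c) (Δ e) - pairApply (u c) (u.flip e) (Δ d))

/-! With `T = Q + γ·id`, both cosystems involve the same operator on `C ⊗ C`, namely
`Q ⊗ id + id ⊗ T = T ⊗ id + id ⊗ Q = Q ⊗ id + id ⊗ Q + γ·id`; call it `E`. The Rota-Baxter identity
reads `(Q ⊗ Q) Δ = E Δ Q`, and since `T ⊗ T = Q ⊗ Q + γ E`, it yields
`(T ⊗ T) Δ = E Δ Q + γ E Δ = E Δ T`. -/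

section KroneckerSum

variable {R M N : Type*} [CommSemiring R] [AddCommMonoid M] [Module R M] [AddCommMonoid N]
  [Module R N]

/-- The Kronecker sum `f ⊗ id + id ⊗ g` of two endomorphisms, through which the right-hand sides
of the Rota-Baxter identities are expressed. -/
def kroneckerSum (f : M →ₗ[R] M) (g : N →ₗ[R] N) : M ⊗[R] N →ₗ[R] M ⊗[R] N :=
  TensorProduct.map f LinearMap.id + TensorProduct.map LinearMap.id g

theorem kroneckerSum_add_smul_id_left (f : M →ₗ[R] M) (g : N →ₗ[R] N) (γ : R) :
    kroneckerSum (f + γ • LinearMap.id) g = kroneckerSum f g + γ • LinearMap.id := by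
  simp only [kroneckerSum, TensorProduct.map_add_left, TensorProduct.map_smul_left,
    TensorProduct.map_id]
  abel

theorem kroneckerSum_add_smul_id_right (f : M →ₗ[R] M) (g : N →ₗ[R] N) (γ : R) :
    kroneckerSum f (g + γ • LinearMap.id) = kroneckerSum f g + γ • LinearMap.id := by
  simp only [kroneckerSum, TensorProduct.map_add_right, TensorProduct.map_smul_right,
    TensorProduct.map_id, add_assoc]

theorem map_add_smul_id_add_smul_id (f : M →ₗ[R] M) (g : N →ₗ[R] N) (γ : R) :
    TensorProduct.map (f + γ • LinearMap.id) (g + γ • LinearMap.id) =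
      TensorProduct.map f g + γ • kroneckerSum f (g + γ • LinearMap.id) := by
  simp only [kroneckerSum, TensorProduct.map_add_left, TensorProduct.map_add_right,
    TensorProduct.map_smul_left, TensorProduct.map_smul_right]
  module

end KroneckerSum

section RotaBaxter

variable {R M : Type*} [CommSemiring R] [AddCommMonoid M] [Module R M]
  {Δ : M →ₗ[R] M ⊗[R] M} {γ : R} {Q T : M →ₗ[R] M}

/-- The Rota-Baxter identity of weight `γ` for `Q`, as an equation of linear maps. The
comultiplication `Δ` is an arbitrary linear map. -/
def IsRotaBaxterCoalgebra (Δ : M →ₗ[R] M ⊗[R] M) (γ : R) (Q : M →ₗ[R] M) : Prop :=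
  TensorProduct.map Q Q ∘ₗ Δ =
    TensorProduct.map LinearMap.id Q ∘ₗ Δ ∘ₗ Q + TensorProduct.map Q LinearMap.id ∘ₗ Δ ∘ₗ Q +
      γ • Δ ∘ₗ Q

/-- The Rota-Baxter cosystem identities of `IsRBCosystem`, as equations of linear maps over a
commutative semiring. -/
def IsRotaBaxterCosystem (Δ : M →ₗ[R] M ⊗[R] M) (Q T : M →ₗ[R] M) : Prop :=
  TensorProduct.map Q Q ∘ₗ Δ = kroneckerSum Q T ∘ₗ Δ ∘ₗ Q ∧
    TensorProduct.map T T ∘ₗ Δ = kroneckerSum Q T ∘ₗ Δ ∘ₗ T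

theorem isRBCosystem_iff_isRotaBaxterCosystem {Δ : C →ₗ[K] C ⊗[K] C} {Q T : C →ₗ[K] C} :
    IsRBCosystem Δ Q T ↔ IsRotaBaxterCosystem Δ Q T := by
  simp only [IsRBCosystem, IsRotaBaxterCosystem, kroneckerSum, LinearMap.ext_iff,
    LinearMap.comp_apply, LinearMap.add_apply]

theorem IsRotaBaxterCosystem.swap (h : IsRotaBaxterCosystem Δ Q T)
    (hQT : kroneckerSum Q T = kroneckerSum T Q) : IsRotaBaxterCosystem Δ T Q :=
  ⟨hQT ▸ h.2, hQT ▸ h.1⟩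

namespace IsRotaBaxterCoalgebra

theorem map_comp_eq (h : IsRotaBaxterCoalgebra Δ γ Q) :
    TensorProduct.map Q Q ∘ₗ Δ = kroneckerSum Q (Q + γ • LinearMap.id) ∘ₗ Δ ∘ₗ Q := by
  rw [h, kroneckerSum_add_smul_id_right, kroneckerSum, LinearMap.add_comp, LinearMap.add_comp,
    LinearMap.smul_comp, LinearMap.id_comp, add_comm (TensorProduct.map LinearMap.id Q ∘ₗ _)]

theorem map_add_smul_id_comp_eq (h : IsRotaBaxterCoalgebra Δ γ Q) :
    TensorProduct.map (Q + γ • LinearMap.id) (Q + γ • LinearMap.id) ∘ₗ Δ =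
      kroneckerSum Q (Q + γ • LinearMap.id) ∘ₗ Δ ∘ₗ (Q + γ • LinearMap.id) := by
  set E := kroneckerSum Q (Q + γ • LinearMap.id)
  calc TensorProduct.map (Q + γ • LinearMap.id) (Q + γ • LinearMap.id) ∘ₗ Δ
      = TensorProduct.map Q Q ∘ₗ Δ + γ • E ∘ₗ Δ := by
        rw [map_add_smul_id_add_smul_id, LinearMap.add_comp, LinearMap.smul_comp]
    _ = E ∘ₗ Δ ∘ₗ Q + γ • E ∘ₗ Δ := by rw [h.map_comp_eq]
    _ = E ∘ₗ Δ ∘ₗ (Q + γ • LinearMap.id) := by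
        simp only [LinearMap.comp_add, LinearMap.comp_smul, LinearMap.comp_id]

theorem isRotaBaxterCosystem (h : IsRotaBaxterCoalgebra Δ γ Q) :
    IsRotaBaxterCosystem Δ Q (Q + γ • LinearMap.id) :=
  ⟨h.map_comp_eq, h.map_add_smul_id_comp_eq⟩

end IsRotaBaxterCoalgebra

theorem rotaBaxterCoalgebra_gives_cosystems_general (h : IsRotaBaxterCoalgebra Δ γ Q) :
    IsRotaBaxterCosystem Δ Q (Q + γ • LinearMap.id) ∧
      IsRotaBaxterCosystem Δ (Q + γ • LinearMap.id) Q := by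
  have kroneckerSum_comm :
      kroneckerSum Q (Q + γ • LinearMap.id) = kroneckerSum (Q + γ • LinearMap.id) Q := by
    rw [kroneckerSum_add_smul_id_left, kroneckerSum_add_smul_id_right]
  exact ⟨h.isRotaBaxterCosystem, h.isRotaBaxterCosystem.swap kroneckerSum_comm⟩

end RotaBaxter

/-- If `(C, Q)` is a Rota-Baxter coalgebra of weight `γ`, then
`(C, Q, Q + γ·id)` and `(C, Q + γ·id, Q)` are Rota-Baxter cosystems. -/
theorem rotaBaxterCoalgebra_gives_cosystems
    (Δ : C →ₗ[K] C ⊗[K] C) (hΔ : Coassoc Δ) (γ : K) (Q : C →ₗ[K] C)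
    (hRB : ∀ c : C, TensorProduct.map Q Q (Δ c) =
      TensorProduct.map LinearMap.id Q (Δ (Q c)) +
      TensorProduct.map Q LinearMap.id (Δ (Q c)) + γ • Δ (Q c)) :
    IsRBCosystem Δ Q (Q + γ • (LinearMap.id : C →ₗ[K] C)) ∧
    IsRBCosystem Δ (Q + γ • (LinearMap.id : C →ₗ[K] C)) Q := by
  simp only [isRBCosystem_iff_isRotaBaxterCosystem]
  exact rotaBaxterCoalgebra_gives_cosystems_general (LinearMap.ext hRB)

end
end

section
/- Let C be a coalgebra over a field K, let Q : C → C be a left C-colinear map (i.e. Δ∘Q = (id⊗Q)∘Δ) and let T : C → C be a right C-colinear map (i.e. Δ∘T = (T⊗id)∘Δ). Then (C, Q, T) is a Rota-Baxter cosystem if and only if, for all c ∈ C, c₁ ⊗ (T∘Q)(c₂) = 0 and (Q∘T)(c₁) ⊗ c₂ = 0. -/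
open TensorProduct

noncomputable section

variable {K : Type*} [Field K] {C : Type*} [AddCommGroup C] [Module K C]

section Colinear

variable {R : Type*} [CommSemiring R] {D M N A B : Type*} [AddCommMonoid D] [AddCommMonoid M]
  [AddCommMonoid N] [AddCommMonoid A] [AddCommMonoid B] [Module R D] [Module R M] [Module R N]
  [Module R A] [Module R B]

/-- `f` is a morphism from the left coaction `ρ` to the left coaction `ρ'`. The comodule axioms are
not part of the notion; a comultiplication is regarded as a left coaction of `D` on itself. -/
def IsLeftColinear (ρ : M →ₗ[R] D ⊗[R] M) (ρ' : N →ₗ[R] D ⊗[R] N) (f : M →ₗ[R] N) : Prop :=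
  ∀ m : M, ρ' (f m) = TensorProduct.map LinearMap.id f (ρ m)

/-- `f` is a morphism from the right coaction `ρ` to the right coaction `ρ'`, under the same
conventions as `IsLeftColinear`. -/
def IsRightColinear (ρ : M →ₗ[R] M ⊗[R] D) (ρ' : N →ₗ[R] N ⊗[R] D) (f : M →ₗ[R] N) : Prop :=
  ∀ m : M, ρ' (f m) = TensorProduct.map f LinearMap.id (ρ m)

theorem IsLeftColinear.map_coaction_apply {ρ : M →ₗ[R] D ⊗[R] M} {ρ' : N →ₗ[R] D ⊗[R] N}
    {f : M →ₗ[R] N} (hf : IsLeftColinear ρ ρ' f) (g : D →ₗ[R] A) (h : N →ₗ[R] B) (m : M) :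
    TensorProduct.map g h (ρ' (f m)) = TensorProduct.map g (h ∘ₗ f) (ρ m) := by
  rw [hf m, TensorProduct.map_map, LinearMap.comp_id]

theorem IsRightColinear.map_coaction_apply {ρ : M →ₗ[R] M ⊗[R] D} {ρ' : N →ₗ[R] N ⊗[R] D}
    {f : M →ₗ[R] N} (hf : IsRightColinear ρ ρ' f) (g : N →ₗ[R] A) (h : D →ₗ[R] B) (m : M) :
    TensorProduct.map g h (ρ' (f m)) = TensorProduct.map (g ∘ₗ f) h (ρ m) := by
  rw [hf m, TensorProduct.map_map, LinearMap.comp_id]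

end Colinear

section RotaBaxter

variable {R : Type*} [CommRing R] {D : Type*} [AddCommGroup D] [Module R D]
  {Δ : D →ₗ[R] D ⊗[R] D} {Q T : D →ₗ[R] D}

theorem IsLeftColinear.rotaBaxter_iff (hQ : IsLeftColinear Δ Δ Q) (T : D →ₗ[R] D) (d : D) :
    TensorProduct.map Q Q (Δ d) =
        TensorProduct.map Q LinearMap.id (Δ (Q d)) + TensorProduct.map LinearMap.id T (Δ (Q d)) ↔
      TensorProduct.map LinearMap.id (T ∘ₗ Q) (Δ d) = 0 := by
  rw [hQ.map_coaction_apply, hQ.map_coaction_apply, LinearMap.id_comp, left_eq_add]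

theorem IsRightColinear.rotaBaxter_iff (hT : IsRightColinear Δ Δ T) (Q : D →ₗ[R] D) (d : D) :
    TensorProduct.map T T (Δ d) =
        TensorProduct.map Q LinearMap.id (Δ (T d)) + TensorProduct.map LinearMap.id T (Δ (T d)) ↔
      TensorProduct.map (Q ∘ₗ T) LinearMap.id (Δ d) = 0 := by
  rw [hT.map_coaction_apply, hT.map_coaction_apply, LinearMap.id_comp, right_eq_add]

theorem cosystem_iff_orthogonality_pointwise_general
    (hQ : IsLeftColinear Δ Δ Q) (hT : IsRightColinear Δ Δ T) :
    ((∀ d : D, TensorProduct.map Q Q (Δ d) =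
        TensorProduct.map Q LinearMap.id (Δ (Q d)) +
        TensorProduct.map LinearMap.id T (Δ (Q d))) ∧
      (∀ d : D, TensorProduct.map T T (Δ d) =
        TensorProduct.map Q LinearMap.id (Δ (T d)) +
        TensorProduct.map LinearMap.id T (Δ (T d)))) ↔
      ∀ d : D, TensorProduct.map LinearMap.id (T ∘ₗ Q) (Δ d) = 0 ∧
        TensorProduct.map (Q ∘ₗ T) LinearMap.id (Δ d) = 0 := by
  simp only [hQ.rotaBaxter_iff, hT.rotaBaxter_iff, forall_and]

end RotaBaxter

/-- For `Q` left colinear and `T` right colinear, `(C, Q, T)` is a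
Rota-Baxter cosystem iff `c₁ ⊗ (T∘Q)(c₂) = 0` and `(Q∘T)(c₁) ⊗ c₂ = 0` for all `c`. -/
theorem cosystem_iff_orthogonality_pointwise
    (Δ : C →ₗ[K] C ⊗[K] C) (hΔ : Coassoc Δ) (Q T : C →ₗ[K] C)
    (hQ : ∀ c : C, Δ (Q c) = TensorProduct.map LinearMap.id Q (Δ c))
    (hT : ∀ c : C, Δ (T c) = TensorProduct.map T LinearMap.id (Δ c)) :
    IsRBCosystem Δ Q T ↔
      ∀ c : C, TensorProduct.map LinearMap.id (T ∘ₗ Q) (Δ c) = 0 ∧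
        TensorProduct.map (Q ∘ₗ T) LinearMap.id (Δ c) = 0 :=
  cosystem_iff_orthogonality_pointwise_general hQ hT

end
end

section
/- Let C be a coalgebra over a field K and let σ, τ : C → K be linear functionals such that σ(c₁)τ(c₂) = 0 and σ(c₁)c₂ = c₁σ(c₂) for all c ∈ C. Define Q, T : C → C by Q(c) = c₁σ(c₂) and T(c) = τ(c₁)c₂. Then (C, Q, T) is a Rota-Baxter cosystem. -/
open TensorProduct

noncomputable section

variable {K : Type*} [Field K] {C : Type*} [AddCommGroup C] [Module K C]

/-!
Write `Q_f(c) = c₁f(c₂)` and `T_f(c) = f(c₁)c₂`. Coassociativity gives `Δ Q_f = (id ⊗ Q_f) Δ` and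
`Δ T_f = (T_f ⊗ id) Δ`, so in each Rota-Baxter identity one summand on the right equals the left
side, and the other vanishes as soon as `T_τ Q_σ = Q_σ T_τ = 0`. These two composites agree, both
being `c ↦ τ(c₁)c₂σ(c₃)`. Since `Q_σ = T_σ`, they equal `T_τ T_σ = T_g` for the convolution
`g(c) = σ(c₁)τ(c₂)`, which is zero.
-/

section Contraction

variable {R M : Type*} [CommSemiring R] [AddCommMonoid M] [Module R M]

/-- Coassociativity of a comultiplication on a module over a commutative semiring, as an equation of
linear maps; over a field it is `Coassoc`. -/
def IsCoassociative (Δ : M →ₗ[R] M ⊗[R] M) : Prop :=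
  (TensorProduct.assoc R M M M).toLinearMap ∘ₗ Δ.rTensor M ∘ₗ Δ = Δ.lTensor M ∘ₗ Δ

/-- The map `c ↦ f(c₁)c₂`, the right action of the functional `f` on a coalgebra. -/
def leftContract (Δ : M →ₗ[R] M ⊗[R] M) (f : M →ₗ[R] R) : M →ₗ[R] M :=
  (TensorProduct.lid R M).toLinearMap ∘ₗ f.rTensor M ∘ₗ Δ

/-- The map `c ↦ c₁f(c₂)`, the left action of the functional `f` on a coalgebra. -/
def rightContract (Δ : M →ₗ[R] M ⊗[R] M) (f : M →ₗ[R] R) : M →ₗ[R] M :=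
  (TensorProduct.rid R M).toLinearMap ∘ₗ f.lTensor M ∘ₗ Δ

/-- The convolution product `c ↦ f(c₁)g(c₂)` of two functionals on a coalgebra. -/
def convolve (Δ : M →ₗ[R] M ⊗[R] M) (f g : M →ₗ[R] R) : M →ₗ[R] R :=
  TensorProduct.lift ((LinearMap.mul R R).compl₁₂ f g) ∘ₗ Δ

variable {Δ : M →ₗ[R] M ⊗[R] M}

theorem leftContract_zero : leftContract Δ 0 = 0 := by
  simp [leftContract]

theorem comp_leftContract (f g : M →ₗ[R] R) : g ∘ₗ leftContract Δ f = convolve Δ f g := by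
  have comp_lid_rTensor : g ∘ₗ (TensorProduct.lid R M).toLinearMap ∘ₗ f.rTensor M =
      TensorProduct.lift ((LinearMap.mul R R).compl₁₂ f g) := by
    ext x y
    simp
  exact congrArg (· ∘ₗ Δ) comp_lid_rTensor

theorem comul_comp_leftContract (hΔ : IsCoassociative Δ) (f : M →ₗ[R] R) :
    Δ ∘ₗ leftContract Δ f = (leftContract Δ f).rTensor M ∘ₗ Δ := by
  have comul_lid : Δ ∘ₗ (TensorProduct.lid R M).toLinearMap ∘ₗ f.rTensor M =
      (TensorProduct.lid R (M ⊗[R] M)).toLinearMap ∘ₗ f.rTensor (M ⊗[R] M) ∘ₗ Δ.lTensor M := by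
    ext x y
    simp
  have lid_assoc : (TensorProduct.lid R (M ⊗[R] M)).toLinearMap ∘ₗ f.rTensor (M ⊗[R] M) ∘ₗ
      (TensorProduct.assoc R M M M).toLinearMap =
      ((TensorProduct.lid R M).toLinearMap ∘ₗ f.rTensor M).rTensor M := by
    ext x y z
    simp [TensorProduct.smul_tmul']
  calc Δ ∘ₗ leftContract Δ f
      = (TensorProduct.lid R (M ⊗[R] M)).toLinearMap ∘ₗ f.rTensor (M ⊗[R] M) ∘ₗ
          Δ.lTensor M ∘ₗ Δ := congrArg (· ∘ₗ Δ) comul_lid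
    _ = ((TensorProduct.lid R M).toLinearMap ∘ₗ f.rTensor M).rTensor M ∘ₗ Δ.rTensor M ∘ₗ Δ := by
        rw [← hΔ, ← lid_assoc]
        rfl
    _ = (leftContract Δ f).rTensor M ∘ₗ Δ := by
        rw [← LinearMap.comp_assoc, ← LinearMap.rTensor_comp]
        rfl

theorem comul_comp_rightContract (hΔ : IsCoassociative Δ) (f : M →ₗ[R] R) :
    Δ ∘ₗ rightContract Δ f = (rightContract Δ f).lTensor M ∘ₗ Δ := by
  have comul_rid : Δ ∘ₗ (TensorProduct.rid R M).toLinearMap ∘ₗ f.lTensor M =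
      (TensorProduct.rid R (M ⊗[R] M)).toLinearMap ∘ₗ f.lTensor (M ⊗[R] M) ∘ₗ Δ.rTensor M := by
    ext x y
    simp
  have rid_assoc : ((TensorProduct.rid R M).toLinearMap ∘ₗ f.lTensor M).lTensor M ∘ₗ
      (TensorProduct.assoc R M M M).toLinearMap =
      (TensorProduct.rid R (M ⊗[R] M)).toLinearMap ∘ₗ f.lTensor (M ⊗[R] M) := by
    ext x y z
    simp
  calc Δ ∘ₗ rightContract Δ f
      = ((TensorProduct.rid R (M ⊗[R] M)).toLinearMap ∘ₗ f.lTensor (M ⊗[R] M)) ∘ₗ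
          Δ.rTensor M ∘ₗ Δ := congrArg (· ∘ₗ Δ) comul_rid
    _ = ((TensorProduct.rid R M).toLinearMap ∘ₗ f.lTensor M).lTensor M ∘ₗ Δ.lTensor M ∘ₗ Δ := by
        rw [← hΔ, ← rid_assoc]
        rfl
    _ = (rightContract Δ f).lTensor M ∘ₗ Δ := by
        rw [← LinearMap.comp_assoc, ← LinearMap.lTensor_comp]
        rfl

theorem leftContract_comp_leftContract (hΔ : IsCoassociative Δ) (f g : M →ₗ[R] R) :
    leftContract Δ g ∘ₗ leftContract Δ f = leftContract Δ (convolve Δ f g) := by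
  calc leftContract Δ g ∘ₗ leftContract Δ f
      = (TensorProduct.lid R M).toLinearMap ∘ₗ g.rTensor M ∘ₗ (leftContract Δ f).rTensor M ∘ₗ Δ :=
        congrArg (((TensorProduct.lid R M).toLinearMap ∘ₗ g.rTensor M) ∘ₗ ·)
          (comul_comp_leftContract hΔ f)
    _ = leftContract Δ (g ∘ₗ leftContract Δ f) := by
        rw [← LinearMap.comp_assoc Δ, ← LinearMap.rTensor_comp]
        rfl
    _ = leftContract Δ (convolve Δ f g) := by rw [comp_leftContract]

theorem leftContract_comp_rightContract (hΔ : IsCoassociative Δ) (f g : M →ₗ[R] R) :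
    leftContract Δ g ∘ₗ rightContract Δ f = rightContract Δ f ∘ₗ leftContract Δ g := by
  have lid_lTensor : (TensorProduct.lid R M).toLinearMap ∘ₗ g.rTensor M ∘ₗ
      (rightContract Δ f).lTensor M =
      rightContract Δ f ∘ₗ (TensorProduct.lid R M).toLinearMap ∘ₗ g.rTensor M := by
    ext x y
    simp
  calc leftContract Δ g ∘ₗ rightContract Δ f
      = (TensorProduct.lid R M).toLinearMap ∘ₗ g.rTensor M ∘ₗ (rightContract Δ f).lTensor M ∘ₗ Δ :=
        congrArg (((TensorProduct.lid R M).toLinearMap ∘ₗ g.rTensor M) ∘ₗ ·)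
          (comul_comp_rightContract hΔ f)
    _ = rightContract Δ f ∘ₗ leftContract Δ g := congrArg (· ∘ₗ Δ) lid_lTensor

theorem leftContract_comp_rightContract_eq_zero (hΔ : IsCoassociative Δ) {σ τ : M →ₗ[R] R}
    (hστ : convolve Δ σ τ = 0) (hσ : leftContract Δ σ = rightContract Δ σ) :
    leftContract Δ τ ∘ₗ rightContract Δ σ = 0 := by
  rw [← hσ, leftContract_comp_leftContract hΔ, hστ, leftContract_zero]

theorem cosystem_from_functionals_general (hΔ : IsCoassociative Δ) {σ τ : M →ₗ[R] R}
    (hτσ : leftContract Δ τ ∘ₗ rightContract Δ σ = 0) :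
    (∀ c, TensorProduct.map (rightContract Δ σ) (rightContract Δ σ) (Δ c) =
      (rightContract Δ σ).rTensor M (Δ (rightContract Δ σ c)) +
      (leftContract Δ τ).lTensor M (Δ (rightContract Δ σ c))) ∧
    (∀ c, TensorProduct.map (leftContract Δ τ) (leftContract Δ τ) (Δ c) =
      (rightContract Δ σ).rTensor M (Δ (leftContract Δ τ c)) +
      (leftContract Δ τ).lTensor M (Δ (leftContract Δ τ c))) := by
  have hστ : rightContract Δ σ ∘ₗ leftContract Δ τ = 0 := by
    rw [← leftContract_comp_rightContract hΔ, hτσ]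
  have comul_right (c : M) : Δ (rightContract Δ σ c) = (rightContract Δ σ).lTensor M (Δ c) :=
    LinearMap.congr_fun (comul_comp_rightContract hΔ σ) c
  have comul_left (c : M) : Δ (leftContract Δ τ c) = (leftContract Δ τ).rTensor M (Δ c) :=
    LinearMap.congr_fun (comul_comp_leftContract hΔ τ) c
  constructor <;> intro c
  · rw [comul_right, ← LinearMap.lTensor_comp_apply, hτσ, LinearMap.lTensor_zero,
      LinearMap.zero_apply, add_zero, ← LinearMap.rTensor_comp_lTensor, LinearMap.comp_apply]
  · rw [comul_left, ← LinearMap.rTensor_comp_apply, hστ, LinearMap.rTensor_zero,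
      LinearMap.zero_apply, zero_add, ← LinearMap.lTensor_comp_rTensor, LinearMap.comp_apply]

end Contraction

/-- For functionals `σ, τ` with `σ(c₁)τ(c₂) = 0` and
`σ(c₁)c₂ = c₁σ(c₂)`, the maps `Q(c) = c₁σ(c₂)` and `T(c) = τ(c₁)c₂` give a
Rota-Baxter cosystem. -/
theorem cosystem_from_functionals
    (Δ : C →ₗ[K] C ⊗[K] C) (hΔ : Coassoc Δ) (σ τ : C →ₗ[K] K)
    (h1 : ∀ c : C, pairApply σ τ (Δ c) = 0)
    (h2 : ∀ c : C, (TensorProduct.lid K C) (TensorProduct.map σ LinearMap.id (Δ c)) =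
      (TensorProduct.rid K C) (TensorProduct.map LinearMap.id σ (Δ c)))
    (Q T : C →ₗ[K] C)
    (hQ : ∀ c : C, Q c = (TensorProduct.rid K C) (TensorProduct.map LinearMap.id σ (Δ c)))
    (hT : ∀ c : C, T c = (TensorProduct.lid K C) (TensorProduct.map τ LinearMap.id (Δ c))) :
    IsRBCosystem Δ Q T := by
  obtain rfl : Q = rightContract Δ σ := LinearMap.ext hQ
  obtain rfl : T = leftContract Δ τ := LinearMap.ext hT
  exact cosystem_from_functionals_general (LinearMap.ext hΔ)
    (leftContract_comp_rightContract_eq_zero (LinearMap.ext hΔ)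
      (LinearMap.ext h1) (LinearMap.ext h2))

end
end

section
/- Let (C, Q, T) be a Rota-Baxter cosystem over a field K. Define Δ_* : C → C ⊗ C by Δ_*(c) = Q(c₁) ⊗ c₂ + c₁ ⊗ T(c₂). Then Δ_* is coassociative: (Δ_* ⊗ id)∘Δ_* = (id ⊗ Δ_*)∘Δ_*, so (C, Δ_*) is a coassociative coalgebra. -/
open TensorProduct

noncomputable section

variable {K : Type*} [Field K] {C : Type*} [AddCommGroup C] [Module K C]

/-!
The Rota–Baxter conditions say that `Q` and `T` are comultiplicative from `(C, Δ)` to `(C, Δ_*)`.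
Together with the coassociativity of `Δ`, this makes both iterates of `Δ_*` equal to
`Q c₁ ⊗ Q c₂ ⊗ c₃ + Q c₁ ⊗ c₂ ⊗ T c₃ + c₁ ⊗ T c₂ ⊗ T c₃`: the condition on `Q` computes
`(Δ_* ⊗ id) ∘ Δ_*`, the condition on `T` computes `(id ⊗ Δ_*) ∘ Δ_*`.
-/

section StarComul

variable {R M : Type*} [CommSemiring R] [AddCommMonoid M] [Module R M]

theorem assoc_map_map_comp {N₁ N₂ N₃ : Type*} [AddCommMonoid N₁] [AddCommMonoid N₂]
    [AddCommMonoid N₃] [Module R N₁] [Module R N₂] [Module R N₃] {Δ : M →ₗ[R] M ⊗[R] M} {c : M}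
    (hΔ : TensorProduct.assoc R M M M (map Δ .id (Δ c)) = map .id Δ (Δ c))
    (f : M →ₗ[R] N₁) (g : M →ₗ[R] N₂) (k : M →ₗ[R] N₃) :
    TensorProduct.assoc R N₁ N₂ N₃ (map (map f g ∘ₗ Δ) k (Δ c)) =
      map f (map g k ∘ₗ Δ) (Δ c) :=
  calc
    _ = TensorProduct.assoc R N₁ N₂ N₃ (map (map f g) k (map Δ .id (Δ c))) := by
      rw [map_map, LinearMap.comp_id]
    _ = map f (map g k) (map .id Δ (Δ c)) := by rw [← map_map_assoc, hΔ]
    _ = map f (map g k ∘ₗ Δ) (Δ c) := by rw [map_map, LinearMap.comp_id]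

/-- The comultiplication `Δ_*(c) = Q(c₁) ⊗ c₂ + c₁ ⊗ T(c₂)` obtained by twisting `Δ` with `Q` and
`T`. -/
def starComul (Δ : M →ₗ[R] M ⊗[R] M) (Q T : M →ₗ[R] M) : M →ₗ[R] M ⊗[R] M :=
  map Q .id ∘ₗ Δ + map .id T ∘ₗ Δ

theorem starComul_apply (Δ : M →ₗ[R] M ⊗[R] M) (Q T : M →ₗ[R] M) (c : M) :
    starComul Δ Q T c = map Q .id (Δ c) + map .id T (Δ c) :=
  rfl

variable {Δ : M →ₗ[R] M ⊗[R] M} {Q T : M →ₗ[R] M}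

theorem map_starComul_id_starComul (hQ : starComul Δ Q T ∘ₗ Q = map Q Q ∘ₗ Δ) (c : M) :
    map (starComul Δ Q T) .id (starComul Δ Q T c) =
      map (map Q Q ∘ₗ Δ) .id (Δ c) + map (map Q .id ∘ₗ Δ) T (Δ c) +
        map (map .id T ∘ₗ Δ) T (Δ c) :=
  calc
    _ = map (starComul Δ Q T ∘ₗ Q) .id (Δ c) + map (starComul Δ Q T) T (Δ c) := by
      simp only [starComul_apply, map_add, map_map, LinearMap.comp_id, LinearMap.id_comp]
    _ = _ := by
      rw [hQ, starComul, map_add_left, LinearMap.add_apply, add_assoc]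

theorem map_id_starComul_starComul (hT : starComul Δ Q T ∘ₗ T = map T T ∘ₗ Δ) (c : M) :
    map .id (starComul Δ Q T) (starComul Δ Q T c) =
      map Q (map Q .id ∘ₗ Δ) (Δ c) + map Q (map .id T ∘ₗ Δ) (Δ c) +
        map .id (map T T ∘ₗ Δ) (Δ c) :=
  calc
    _ = map Q (starComul Δ Q T) (Δ c) + map .id (starComul Δ Q T ∘ₗ T) (Δ c) := by
      simp only [starComul_apply, map_add, map_map, LinearMap.comp_id, LinearMap.id_comp]
    _ = _ := by
      rw [hT, starComul, map_add_right, LinearMap.add_apply]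

theorem star_comultiplication_coassociative_general
    (hΔ : ∀ c, TensorProduct.assoc R M M M (map Δ .id (Δ c)) = map .id Δ (Δ c))
    (hQ : starComul Δ Q T ∘ₗ Q = map Q Q ∘ₗ Δ) (hT : starComul Δ Q T ∘ₗ T = map T T ∘ₗ Δ) (c : M) :
    TensorProduct.assoc R M M M (map (starComul Δ Q T) .id (starComul Δ Q T c)) =
      map .id (starComul Δ Q T) (starComul Δ Q T c) := by
  rw [map_starComul_id_starComul hQ, map_id_starComul_starComul hT]
  simp only [map_add, assoc_map_map_comp (hΔ c)]

end StarComul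

/-- For a Rota-Baxter cosystem `(C, Q, T)`, the comultiplication
`Δ_*(c) = Q(c₁) ⊗ c₂ + c₁ ⊗ T(c₂)` is coassociative. -/
theorem star_comultiplication_coassociative
    (Δ : C →ₗ[K] C ⊗[K] C) (hΔ : Coassoc Δ) (Q T : C →ₗ[K] C)
    (h : IsRBCosystem Δ Q T) :
    Coassoc (TensorProduct.map Q LinearMap.id ∘ₗ Δ +
      TensorProduct.map LinearMap.id T ∘ₗ Δ) :=
  star_comultiplication_coassociative_general hΔ
    (LinearMap.ext fun c ↦ (h.1 c).symm) (LinearMap.ext fun c ↦ (h.2 c).symm)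

end
end

section
/- Let (C, Q, T) be a Rota-Baxter cosystem over a field K. Define Δ_• : C → C ⊗ C by Δ_•(c) = Q(c₁) ⊗ c₂ − T(c₂) ⊗ c₁. Then (C, Δ_•) is a pre-Lie coalgebra, i.e. the map Δ_C := (Δ_• ⊗ id)∘Δ_• − (id ⊗ Δ_•)∘Δ_• satisfies Δ_C = Φ₍₁₂₎∘Δ_C, where Φ₍₁₂₎ : C⊗C⊗C → C⊗C⊗C is the linear map with Φ₍₁₂₎(x ⊗ y ⊗ z) = y ⊗ x ⊗ z. -/
open TensorProduct

noncomputable section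

variable {K : Type*} [Field K] {C : Type*} [AddCommGroup C] [Module K C]

/-!
The maps `Δ_≺(c) = Q(c₁) ⊗ c₂` and `Δ_≻(c) = c₁ ⊗ T(c₂)` form a dendriform coalgebra: its axioms are
coassociativity with `Q` and `T` applied to two of the three factors, where `Q ⊗ Q` and `T ⊗ T` are
rewritten by the Rota-Baxter identities. For any dendriform coalgebra, with `τ` the flip,
the coassociator of `Δ_≺ - τ ∘ Δ_≻` is a sum `X + Φ₍₁₂₎ X`, hence invariant under the
involution `Φ₍₁₂₎`.
-/

section Split

variable {R A M N P S M₁ N₁ P₁ S₁ : Type*} [CommSemiring R]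
  [AddCommMonoid A] [Module R A] [AddCommMonoid M] [Module R M] [AddCommMonoid N] [Module R N]
  [AddCommMonoid P] [Module R P] [AddCommMonoid S] [Module R S] [AddCommMonoid M₁] [Module R M₁]
  [AddCommMonoid N₁] [Module R N₁] [AddCommMonoid P₁] [Module R P₁] [AddCommMonoid S₁] [Module R S₁]

/-- The composite `(f ⊗ id) ∘ g`, which splits the first factor of `g` by `f`. Its values are
reassociated to the right, so that they can be compared with those of `splitSnd`. -/
def splitFst (f : M →ₗ[R] N ⊗[R] P) (g : A →ₗ[R] M ⊗[R] S) : A →ₗ[R] N ⊗[R] (P ⊗[R] S) :=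
  (TensorProduct.assoc R N P S).toLinearMap ∘ₗ f.rTensor S ∘ₗ g

/-- The composite `(id ⊗ f) ∘ g`, which splits the second factor of `g` by `f`. -/
def splitSnd (f : M →ₗ[R] P ⊗[R] S) (g : A →ₗ[R] N ⊗[R] M) : A →ₗ[R] N ⊗[R] (P ⊗[R] S) :=
  f.lTensor N ∘ₗ g

theorem splitFst_add_left (f f₁ : M →ₗ[R] N ⊗[R] P) (g : A →ₗ[R] M ⊗[R] S) :
    splitFst (f + f₁) g = splitFst f g + splitFst f₁ g := by
  simp only [splitFst, LinearMap.rTensor_add, LinearMap.add_comp, LinearMap.comp_add]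

theorem splitSnd_add_left (f f₁ : M →ₗ[R] P ⊗[R] S) (g : A →ₗ[R] N ⊗[R] M) :
    splitSnd (f + f₁) g = splitSnd f g + splitSnd f₁ g := by
  simp only [splitSnd, LinearMap.lTensor_add, LinearMap.add_comp]

theorem splitFst_rTensor_comp (f : M →ₗ[R] N ⊗[R] P) (k : M₁ →ₗ[R] M) (g : A →ₗ[R] M₁ ⊗[R] S) :
    splitFst f (k.rTensor S ∘ₗ g) = splitFst (f ∘ₗ k) g := by
  simp only [splitFst, LinearMap.rTensor_comp, LinearMap.comp_assoc]

theorem splitSnd_lTensor_comp (f : M →ₗ[R] P ⊗[R] S) (k : M₁ →ₗ[R] M) (g : A →ₗ[R] N ⊗[R] M₁) :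
    splitSnd f (k.lTensor N ∘ₗ g) = splitSnd (f ∘ₗ k) g := by
  simp only [splitSnd, LinearMap.lTensor_comp, LinearMap.comp_assoc]

theorem splitFst_map_comp_lTensor_comp (a : N →ₗ[R] N₁) (b : P →ₗ[R] P₁) (c : S →ₗ[R] S₁)
    (f : M →ₗ[R] N ⊗[R] P) (g : A →ₗ[R] M ⊗[R] S) :
    splitFst (map a b ∘ₗ f) (c.lTensor M ∘ₗ g) = map a (map b c) ∘ₗ splitFst f g := by
  have rTensor_comp_lTensor :
      (map a b ∘ₗ f).rTensor S₁ ∘ₗ c.lTensor M = map (map a b) c ∘ₗ f.rTensor S := by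
    rw [LinearMap.rTensor_comp_lTensor, LinearMap.map_comp_rTensor]
  simp only [splitFst, ← LinearMap.comp_assoc, map_map_comp_assoc_eq]
  simp only [LinearMap.comp_assoc, ← rTensor_comp_lTensor]

theorem splitSnd_map_comp_rTensor_comp (a : N →ₗ[R] N₁) (b : P →ₗ[R] P₁) (c : S →ₗ[R] S₁)
    (f : M →ₗ[R] P ⊗[R] S) (g : A →ₗ[R] N ⊗[R] M) :
    splitSnd (map b c ∘ₗ f) (a.rTensor M ∘ₗ g) = map a (map b c) ∘ₗ splitSnd f g := by
  simp only [splitSnd, ← LinearMap.comp_assoc, LinearMap.lTensor_comp_rTensor,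
    LinearMap.map_comp_lTensor]

/-- The swap of the last two factors of a triple tensor product. Together with
`TensorProduct.leftComm` it generates all permutations of the factors. -/
def swapLastTwo : N ⊗[R] (P ⊗[R] S) →ₗ[R] N ⊗[R] (S ⊗[R] P) :=
  (TensorProduct.comm R P S).toLinearMap.lTensor N

theorem leftComm_leftComm (t : N ⊗[R] (P ⊗[R] S)) : leftComm R P N S (leftComm R N P S t) = t := by
  have leftComm_comp_leftComm :
      (leftComm R P N S).toLinearMap ∘ₗ (leftComm R N P S).toLinearMap = LinearMap.id := by
    ext; simp
  exact DFunLike.congr_fun leftComm_comp_leftComm t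

theorem swapLastTwo_leftComm_swapLastTwo (t : N ⊗[R] (P ⊗[R] S)) :
    swapLastTwo (leftComm R N S P (swapLastTwo t)) =
      leftComm R P S N (swapLastTwo (leftComm R N P S t)) := by
  have braid :
      swapLastTwo ∘ₗ (leftComm R N S P).toLinearMap ∘ₗ swapLastTwo =
        (leftComm R P S N).toLinearMap ∘ₗ swapLastTwo ∘ₗ (leftComm R N P S).toLinearMap := by
    ext; simp [swapLastTwo]
  exact DFunLike.congr_fun braid t

theorem splitFst_comm_comp (f : M →ₗ[R] N ⊗[R] P) (g : A →ₗ[R] M ⊗[R] S) :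
    splitFst ((TensorProduct.comm R N P).toLinearMap ∘ₗ f) g =
      (leftComm R N P S).toLinearMap ∘ₗ splitFst f g := by
  have assoc_comp_comm :
      (TensorProduct.assoc R P N S).toLinearMap ∘ₗ
          (TensorProduct.comm R N P).toLinearMap.rTensor S =
        (leftComm R N P S).toLinearMap ∘ₗ (TensorProduct.assoc R N P S).toLinearMap := by
    ext; simp
  simp only [splitFst, LinearMap.rTensor_comp, ← LinearMap.comp_assoc, assoc_comp_comm]

theorem splitSnd_comm_comp (f : M →ₗ[R] P ⊗[R] S) (g : A →ₗ[R] N ⊗[R] M) :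
    splitSnd ((TensorProduct.comm R P S).toLinearMap ∘ₗ f) g = swapLastTwo ∘ₗ splitSnd f g := by
  simp only [splitSnd, swapLastTwo, LinearMap.lTensor_comp, LinearMap.comp_assoc]

theorem splitFst_comp_comm (f : M →ₗ[R] P ⊗[R] S) (g : A →ₗ[R] N ⊗[R] M) :
    splitFst f ((TensorProduct.comm R N M).toLinearMap ∘ₗ g) =
      swapLastTwo ∘ₗ (leftComm R N P S).toLinearMap ∘ₗ splitSnd f g := by
  have assoc_comp_comm :
      (TensorProduct.assoc R P S N).toLinearMap ∘ₗ (TensorProduct.comm R N (P ⊗[R] S)).toLinearMap =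
        swapLastTwo ∘ₗ (leftComm R N P S).toLinearMap := by
    ext; simp [swapLastTwo]
  simp only [splitFst, splitSnd, ← LinearMap.comp_assoc, ← assoc_comp_comm]
  simp only [LinearMap.comp_assoc, LinearMap.rTensor_comp_comm]

theorem splitSnd_comp_comm (f : M →ₗ[R] N ⊗[R] P) (g : A →ₗ[R] M ⊗[R] S) :
    splitSnd f ((TensorProduct.comm R M S).toLinearMap ∘ₗ g) =
      (leftComm R N S P).toLinearMap ∘ₗ swapLastTwo ∘ₗ splitFst f g := by
  have comm_eq :
      (TensorProduct.comm R (N ⊗[R] P) S).toLinearMap =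
        (leftComm R N S P).toLinearMap ∘ₗ swapLastTwo ∘ₗ
          (TensorProduct.assoc R N P S).toLinearMap := by
    ext; simp [swapLastTwo]
  rw [splitSnd, ← LinearMap.comp_assoc, LinearMap.lTensor_comp_comm, comm_eq]
  simp only [splitFst, LinearMap.comp_assoc]

end Split

section Dendriform

variable {R E : Type*} [CommSemiring R] [AddCommMonoid E] [Module R E]

/-- The axioms of a dendriform coalgebra `(Δr, Δl) = (Δ_≻, Δ_≺)` as in `IsDendriformCoalgebra`, but
over a commutative semiring. -/
structure IsDendriformComul (Δr Δl : E →ₗ[R] E ⊗[R] E) : Prop where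
  splitFst_right_right : splitFst Δr Δr = splitSnd Δr Δr + splitSnd Δl Δr
  splitFst_left_right : splitFst Δl Δr = splitSnd Δr Δl
  splitFst_add_splitFst_left : splitFst Δr Δl + splitFst Δl Δl = splitSnd Δl Δl

theorem isDendriformComul_of_rotaBaxter {Δ : E →ₗ[R] E ⊗[R] E} {Q T : E →ₗ[R] E}
    (hΔ : splitFst Δ Δ = splitSnd Δ Δ)
    (hQ : map Q Q ∘ₗ Δ = Q.rTensor E ∘ₗ Δ ∘ₗ Q + T.lTensor E ∘ₗ Δ ∘ₗ Q)
    (hT : map T T ∘ₗ Δ = Q.rTensor E ∘ₗ Δ ∘ₗ T + T.lTensor E ∘ₗ Δ ∘ₗ T) :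
    IsDendriformComul (T.lTensor E ∘ₗ Δ) (Q.rTensor E ∘ₗ Δ) where
  splitFst_right_right := calc
    splitFst (T.lTensor E ∘ₗ Δ) (T.lTensor E ∘ₗ Δ)
      = map LinearMap.id (map T T) ∘ₗ splitFst Δ Δ := splitFst_map_comp_lTensor_comp ..
    _ = splitSnd (map T T ∘ₗ Δ) Δ := by
        rw [hΔ, ← splitSnd_map_comp_rTensor_comp, LinearMap.rTensor_id, LinearMap.id_comp]
    _ = splitSnd (T.lTensor E ∘ₗ Δ) (T.lTensor E ∘ₗ Δ) +
          splitSnd (Q.rTensor E ∘ₗ Δ) (T.lTensor E ∘ₗ Δ) := by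
        rw [hT, splitSnd_add_left, splitSnd_lTensor_comp, splitSnd_lTensor_comp, add_comm,
          LinearMap.comp_assoc, LinearMap.comp_assoc]
  splitFst_left_right := calc
    splitFst (Q.rTensor E ∘ₗ Δ) (T.lTensor E ∘ₗ Δ)
      = map Q (map LinearMap.id T) ∘ₗ splitFst Δ Δ := splitFst_map_comp_lTensor_comp ..
    _ = map Q (map LinearMap.id T) ∘ₗ splitSnd Δ Δ := by rw [hΔ]
    _ = splitSnd (T.lTensor E ∘ₗ Δ) (Q.rTensor E ∘ₗ Δ) :=
        (splitSnd_map_comp_rTensor_comp ..).symm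
  splitFst_add_splitFst_left := calc
    splitFst (T.lTensor E ∘ₗ Δ) (Q.rTensor E ∘ₗ Δ) + splitFst (Q.rTensor E ∘ₗ Δ) (Q.rTensor E ∘ₗ Δ)
      = splitFst (map Q Q ∘ₗ Δ) Δ := by
        rw [hQ, splitFst_add_left, splitFst_rTensor_comp, splitFst_rTensor_comp, add_comm,
          LinearMap.comp_assoc, LinearMap.comp_assoc]
    _ = map Q (map Q LinearMap.id) ∘ₗ splitSnd Δ Δ := by
        rw [← hΔ, ← splitFst_map_comp_lTensor_comp, LinearMap.lTensor_id, LinearMap.id_comp]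
    _ = splitSnd (Q.rTensor E ∘ₗ Δ) (Q.rTensor E ∘ₗ Δ) :=
        (splitSnd_map_comp_rTensor_comp ..).symm

end Dendriform

section PreLie

variable {R E : Type*} [CommRing R] [AddCommGroup E] [Module R E]

/-- The defect `(δ ⊗ id) ∘ δ - (id ⊗ δ) ∘ δ` of coassociativity of `δ`. -/
def coassociator (δ : E →ₗ[R] E ⊗[R] E) : E →ₗ[R] E ⊗[R] (E ⊗[R] E) :=
  splitFst δ δ - splitSnd δ δ

/-- `δ` is the comultiplication of a (left) pre-Lie coalgebra: its coassociator is invariant under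
the swap `TensorProduct.leftComm` of the first two factors. -/
def IsPreLieComul (δ : E →ₗ[R] E ⊗[R] E) : Prop :=
  coassociator δ = (leftComm R E E E).toLinearMap ∘ₗ coassociator δ

theorem isPreLieComul_of_coassociator_eq_add {δ : E →ₗ[R] E ⊗[R] E}
    {X : E →ₗ[R] E ⊗[R] (E ⊗[R] E)}
    (h : coassociator δ = X + (leftComm R E E E).toLinearMap ∘ₗ X) : IsPreLieComul δ := by
  ext c
  simp only [h, LinearMap.comp_apply, LinearMap.add_apply, LinearEquiv.coe_coe, map_add,
    leftComm_leftComm]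
  exact add_comm _ _

theorem coassociator_sub (f g : E →ₗ[R] E ⊗[R] E) :
    coassociator (f - g) =
      splitFst f f - splitFst f g - splitFst g f + splitFst g g -
        (splitSnd f f - splitSnd f g - splitSnd g f + splitSnd g g) := by
  simp only [coassociator, splitFst, splitSnd, LinearMap.rTensor_sub, LinearMap.lTensor_sub,
    LinearMap.sub_comp, LinearMap.comp_sub]
  abel

theorem IsDendriformComul.coassociator_sub_comm_comp {Δr Δl : E →ₗ[R] E ⊗[R] E}
    (h : IsDendriformComul Δr Δl) :
    let X := swapLastTwo ∘ₗ splitSnd Δr Δl - splitFst Δr Δl -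
      swapLastTwo ∘ₗ (leftComm R E E E).toLinearMap ∘ₗ splitSnd Δl Δr
    coassociator (Δl - (TensorProduct.comm R E E).toLinearMap ∘ₗ Δr) =
      X + (leftComm R E E E).toLinearMap ∘ₗ X := by
  intro X
  rw [coassociator_sub]
  simp only [X, splitFst_comm_comp, splitSnd_comm_comp, splitFst_comp_comm, splitSnd_comp_comm,
    ← h.splitFst_add_splitFst_left, h.splitFst_left_right, h.splitFst_right_right]
  ext c
  simp only [LinearMap.comp_apply, LinearMap.add_apply, LinearMap.sub_apply, LinearEquiv.coe_coe,
    map_add, map_sub, swapLastTwo_leftComm_swapLastTwo]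
  abel

theorem IsDendriformComul.isPreLieComul {Δr Δl : E →ₗ[R] E ⊗[R] E} (h : IsDendriformComul Δr Δl) :
    IsPreLieComul (Δl - (TensorProduct.comm R E E).toLinearMap ∘ₗ Δr) :=
  isPreLieComul_of_coassociator_eq_add h.coassociator_sub_comm_comp

theorem bullet_comultiplication_preLie_general {Δ : E →ₗ[R] E ⊗[R] E} {Q T : E →ₗ[R] E}
    (hΔ : splitFst Δ Δ = splitSnd Δ Δ)
    (hQ : map Q Q ∘ₗ Δ = Q.rTensor E ∘ₗ Δ ∘ₗ Q + T.lTensor E ∘ₗ Δ ∘ₗ Q)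
    (hT : map T T ∘ₗ Δ = Q.rTensor E ∘ₗ Δ ∘ₗ T + T.lTensor E ∘ₗ Δ ∘ₗ T) :
    IsPreLieComul
      (Q.rTensor E ∘ₗ Δ - (TensorProduct.comm R E E).toLinearMap ∘ₗ T.lTensor E ∘ₗ Δ) :=
  (isDendriformComul_of_rotaBaxter hΔ hQ hT).isPreLieComul

end PreLie

/-- For a Rota-Baxter cosystem `(C, Q, T)`, the comultiplication
`Δ_•(c) = Q(c₁) ⊗ c₂ − T(c₂) ⊗ c₁` makes `C` a pre-Lie coalgebra. -/
theorem bullet_comultiplication_preLie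
    (Δ : C →ₗ[K] C ⊗[K] C) (hΔ : Coassoc Δ) (Q T : C →ₗ[K] C)
    (h : IsRBCosystem Δ Q T)
    (Δb : C →ₗ[K] C ⊗[K] C)
    (hΔb : Δb = TensorProduct.map Q LinearMap.id ∘ₗ Δ -
      (TensorProduct.comm K C C).toLinearMap ∘ₗ TensorProduct.map LinearMap.id T ∘ₗ Δ)
    (ΔC : C →ₗ[K] C ⊗[K] (C ⊗[K] C))
    (hΔC : ΔC = (TensorProduct.assoc K C C C).toLinearMap ∘ₗ
        TensorProduct.map Δb LinearMap.id ∘ₗ Δb -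
      TensorProduct.map LinearMap.id Δb ∘ₗ Δb) :
    ΔC = swapFirstTwo ∘ₗ ΔC := by
  subst hΔb hΔC
  -- `swapFirstTwo` unfolds to `leftComm K C C C`.
  exact bullet_comultiplication_preLie_general
    (LinearMap.ext hΔ) (LinearMap.ext h.1) (LinearMap.ext h.2)

end
end

section
/- Let (C, Q, T) be a Rota-Baxter cosystem over a field K. Define F : C⊗C → C⊗C by F(c ⊗ d) = Q(c) ⊗ d + c ⊗ T(d), and F̃ : C⊗C⊗C → C⊗C⊗C by F̃(c ⊗ d ⊗ e) = Q(c) ⊗ Q(d) ⊗ e + Q(c) ⊗ d ⊗ T(e) + c ⊗ T(d) ⊗ T(e). Then F̃∘(Δ ⊗ id) = (F ⊗ id)∘(Δ ⊗ id)∘F and F̃∘(id ⊗ Δ) = (id ⊗ F)∘(id ⊗ Δ)∘F; that is, F is a weak copseudotwistor with weak companion F̃. -/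
open TensorProduct

noncomputable section

variable {K : Type*} [Field K] {C : Type*} [AddCommGroup C] [Module K C]

/-!
Put `F = Q ⊗ id + id ⊗ T`. The cosystem axioms say `(Q ⊗ Q) ∘ Δ = F ∘ Δ ∘ Q` and
`(T ⊗ T) ∘ Δ = F ∘ Δ ∘ T`, and the companion can be grouped in two ways,
`F̃ = (Q ⊗ Q) ⊗ id + F ⊗ T = Q ⊗ F + id ⊗ (T ⊗ T)`. With the first grouping,
`F̃ ∘ (Δ ⊗ id) = (F ∘ Δ ∘ Q) ⊗ id + (F ∘ Δ) ⊗ T = ((F ∘ Δ) ⊗ id) ∘ F`; the second grouping treats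
`id ⊗ Δ` in the same way.
-/

section CommSemiring

open LinearMap

variable {R M : Type*} [CommSemiring R] [AddCommMonoid M] [Module R M]

/-- `F` is a weak copseudotwistor for `Δ` with weak companion `Ft`. Triple tensors are bracketed to
the left, so `id ⊗ Δ` and `id ⊗ F` are conjugated by the associator. -/
def IsWeakCompanion (Δ : M →ₗ[R] M ⊗[R] M) (F : M ⊗[R] M →ₗ[R] M ⊗[R] M)
    (Ft : (M ⊗[R] M) ⊗[R] M →ₗ[R] (M ⊗[R] M) ⊗[R] M) : Prop :=
  Ft ∘ₗ rTensor M Δ = rTensor M F ∘ₗ rTensor M Δ ∘ₗ F ∧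
  Ft ∘ₗ ((TensorProduct.assoc R M M M).symm.toLinearMap ∘ₗ lTensor M Δ) =
    ((TensorProduct.assoc R M M M).symm.toLinearMap ∘ₗ lTensor M F ∘ₗ
      (TensorProduct.assoc R M M M).toLinearMap) ∘ₗ
    ((TensorProduct.assoc R M M M).symm.toLinearMap ∘ₗ lTensor M Δ) ∘ₗ F

/-- The map `Q ⊗ id + id ⊗ T` attached to a Rota-Baxter cosystem `(Q, T)`. -/
def rbTwistor (Q T : M →ₗ[R] M) : M ⊗[R] M →ₗ[R] M ⊗[R] M :=
  map Q .id + map .id T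

/-- The map `Q ⊗ Q ⊗ id + Q ⊗ id ⊗ T + id ⊗ T ⊗ T`, the weak companion of `rbTwistor Q T`. -/
def rbCompanion (Q T : M →ₗ[R] M) : (M ⊗[R] M) ⊗[R] M →ₗ[R] (M ⊗[R] M) ⊗[R] M :=
  map (map Q Q) .id + map (map Q .id) T + map (map .id T) T

theorem rbCompanion_eq_map_rbTwistor (Q T : M →ₗ[R] M) :
    rbCompanion Q T = map (map Q Q) .id + map (rbTwistor Q T) T := by
  rw [rbCompanion, rbTwistor, map_add_left, add_assoc]

theorem rbCompanion_comp_assoc_symm (Q T : M →ₗ[R] M) :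
    rbCompanion Q T ∘ₗ (TensorProduct.assoc R M M M).symm.toLinearMap =
      (TensorProduct.assoc R M M M).symm.toLinearMap ∘ₗ
        (map Q (rbTwistor Q T) + map .id (map T T)) := by
  simp only [rbCompanion, rbTwistor, add_comp, comp_add, map_add_right,
    map_map_comp_assoc_symm_eq]

theorem rbCompanion_comp_rTensor {Δ : M →ₗ[R] M ⊗[R] M} {Q T : M →ₗ[R] M}
    (hQ : map Q Q ∘ₗ Δ = rbTwistor Q T ∘ₗ Δ ∘ₗ Q) :
    rbCompanion Q T ∘ₗ rTensor M Δ =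
      rTensor M (rbTwistor Q T) ∘ₗ rTensor M Δ ∘ₗ rbTwistor Q T :=
  calc
    _ = map (map Q Q ∘ₗ Δ) .id + map (rbTwistor Q T ∘ₗ Δ) T := by
      rw [rbCompanion_eq_map_rbTwistor, add_comp, map_comp_rTensor, map_comp_rTensor]
    _ = map ((rbTwistor Q T ∘ₗ Δ) ∘ₗ Q) .id + map (rbTwistor Q T ∘ₗ Δ) T := by
      rw [hQ, comp_assoc]
    _ = rTensor M (rbTwistor Q T ∘ₗ Δ) ∘ₗ (map Q .id + map .id T) := by
      rw [comp_add, rTensor_comp_map, rTensor_comp_map, comp_id]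
    _ = _ := by
      rw [rTensor_comp, comp_assoc, ← rbTwistor]

theorem map_rbTwistor_add_comp_lTensor {Δ : M →ₗ[R] M ⊗[R] M} {Q T : M →ₗ[R] M}
    (hT : map T T ∘ₗ Δ = rbTwistor Q T ∘ₗ Δ ∘ₗ T) :
    (map Q (rbTwistor Q T) + map .id (map T T)) ∘ₗ lTensor M Δ =
      lTensor M (rbTwistor Q T) ∘ₗ lTensor M Δ ∘ₗ rbTwistor Q T :=
  calc
    _ = map Q (rbTwistor Q T ∘ₗ Δ) + map .id (map T T ∘ₗ Δ) := by
      rw [add_comp, map_comp_lTensor, map_comp_lTensor]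
    _ = map Q (rbTwistor Q T ∘ₗ Δ) + map .id ((rbTwistor Q T ∘ₗ Δ) ∘ₗ T) := by
      rw [hT, comp_assoc]
    _ = lTensor M (rbTwistor Q T ∘ₗ Δ) ∘ₗ (map Q .id + map .id T) := by
      rw [comp_add, lTensor_comp_map, lTensor_comp_map, comp_id]
    _ = _ := by
      rw [lTensor_comp, comp_assoc, ← rbTwistor]

theorem rbCompanion_comp_assoc_symm_comp_lTensor {Δ : M →ₗ[R] M ⊗[R] M} {Q T : M →ₗ[R] M}
    (hT : map T T ∘ₗ Δ = rbTwistor Q T ∘ₗ Δ ∘ₗ T) :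
    rbCompanion Q T ∘ₗ ((TensorProduct.assoc R M M M).symm.toLinearMap ∘ₗ lTensor M Δ) =
      ((TensorProduct.assoc R M M M).symm.toLinearMap ∘ₗ lTensor M (rbTwistor Q T) ∘ₗ
        (TensorProduct.assoc R M M M).toLinearMap) ∘ₗ
      ((TensorProduct.assoc R M M M).symm.toLinearMap ∘ₗ lTensor M Δ) ∘ₗ rbTwistor Q T := by
  rw [← comp_assoc, rbCompanion_comp_assoc_symm, comp_assoc, map_rbTwistor_add_comp_lTensor hT]
  simp only [comp_assoc, LinearEquiv.comp_symm_assoc]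

theorem weak_copseudotwistor_of_cosystem_general {Δ : M →ₗ[R] M ⊗[R] M} {Q T : M →ₗ[R] M}
    (hQ : map Q Q ∘ₗ Δ = rbTwistor Q T ∘ₗ Δ ∘ₗ Q)
    (hT : map T T ∘ₗ Δ = rbTwistor Q T ∘ₗ Δ ∘ₗ T) :
    IsWeakCompanion Δ (rbTwistor Q T) (rbCompanion Q T) :=
  ⟨rbCompanion_comp_rTensor hQ, rbCompanion_comp_assoc_symm_comp_lTensor hT⟩

end CommSemiring

/-- For a Rota-Baxter cosystem `(C, Q, T)`, the map
`F = Q ⊗ id + id ⊗ T` is a weak copseudotwistor with weak companion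
`F̃ = Q⊗Q⊗id + Q⊗id⊗T + id⊗T⊗T`. -/
theorem weak_copseudotwistor_of_cosystem
    (Δ : C →ₗ[K] C ⊗[K] C) (hΔ : Coassoc Δ) (Q T : C →ₗ[K] C)
    (h : IsRBCosystem Δ Q T)
    (F : C ⊗[K] C →ₗ[K] C ⊗[K] C)
    (hF : F = TensorProduct.map Q LinearMap.id + TensorProduct.map LinearMap.id T)
    (Ft : (C ⊗[K] C) ⊗[K] C →ₗ[K] (C ⊗[K] C) ⊗[K] C)
    (hFt : Ft = TensorProduct.map (TensorProduct.map Q Q) LinearMap.id +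
      TensorProduct.map (TensorProduct.map Q LinearMap.id) T +
      TensorProduct.map (TensorProduct.map LinearMap.id T) T) :
    Ft ∘ₗ LinearMap.rTensor C Δ =
      LinearMap.rTensor C F ∘ₗ LinearMap.rTensor C Δ ∘ₗ F ∧
    Ft ∘ₗ ((TensorProduct.assoc K C C C).symm.toLinearMap ∘ₗ LinearMap.lTensor C Δ) =
      ((TensorProduct.assoc K C C C).symm.toLinearMap ∘ₗ LinearMap.lTensor C F ∘ₗ
        (TensorProduct.assoc K C C C).toLinearMap) ∘ₗ
      ((TensorProduct.assoc K C C C).symm.toLinearMap ∘ₗ LinearMap.lTensor C Δ) ∘ₗ F := by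
  subst hF hFt
  exact weak_copseudotwistor_of_cosystem_general (LinearMap.ext h.1) (LinearMap.ext h.2)

end
end

section
/- Let (σ, τ) be a coassociative Yang-Baxter pair on a coalgebra C over a field K. Define Q, T : C → C by Q(c) = σ(c₁, c₃) c₂ and T(c) = τ(c₁, c₃) c₂ (where Δ²(c) = c₁ ⊗ c₂ ⊗ c₃). Then (C, Q, T) is a Rota-Baxter cosystem. -/
open TensorProduct

noncomputable section

variable {K : Type*} [Field K] {C : Type*} [AddCommGroup C] [Module K C]

/-!
A trilinear form `φ` on `C` acts on the iterated coproduct by contracting the odd tensor factors,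
`c ↦ φ(c₁, c₃, c₅) c₂ ⊗ c₄`, and this action is linear in `φ`. By coassociativity each of the three
terms of a Rota-Baxter cosystem identity is the action of one of the three trilinear forms in the
corresponding Yang-Baxter identity, so the latter implies the former.
-/

section Comultiplication

variable {M N : Type*} [AddCommMonoid M] [Module K M] [AddCommMonoid N] [Module K N]

/-- The map `c ↦ c₁ ⊗ f c₂`. Nesting it produces right-bracketed iterated coproducts. -/
def comulTail (Δ : C →ₗ[K] C ⊗[K] C) (f : C →ₗ[K] M) : C →ₗ[K] C ⊗[K] M :=
  LinearMap.lTensor C f ∘ₗ Δ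

/-- Comultiplication of the first tensor factor, `x ⊗ m ↦ x₁ ⊗ (x₂ ⊗ m)`. -/
def comulHead (Δ : C →ₗ[K] C ⊗[K] C) (M : Type*) [AddCommMonoid M] [Module K M] :
    C ⊗[K] M →ₗ[K] C ⊗[K] (C ⊗[K] M) :=
  (TensorProduct.assoc K C C M).toLinearMap ∘ₗ LinearMap.rTensor M Δ

/-- The five-fold iterated coproduct `c ↦ c₁ ⊗ (c₂ ⊗ (c₃ ⊗ (c₄ ⊗ c₅)))`. -/
def comulFive (Δ : C →ₗ[K] C ⊗[K] C) :
    C →ₗ[K] C ⊗[K] (C ⊗[K] (C ⊗[K] (C ⊗[K] C))) :=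
  comulTail Δ (comulTail Δ (comulTail Δ Δ))

@[simp]
theorem comulHead_tmul (Δ : C →ₗ[K] C ⊗[K] C) (x : C) (m : M) :
    comulHead Δ M (x ⊗ₜ m) = TensorProduct.assoc K C C M (Δ x ⊗ₜ m) :=
  rfl

theorem comulTail_id (Δ : C →ₗ[K] C ⊗[K] C) : comulTail Δ LinearMap.id = Δ := by
  simp [comulTail]

theorem comulTail_comp (Δ : C →ₗ[K] C ⊗[K] C) (g : M →ₗ[K] N) (f : C →ₗ[K] M) :
    comulTail Δ (g ∘ₗ f) = LinearMap.lTensor C g ∘ₗ comulTail Δ f := by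
  simp only [comulTail, LinearMap.lTensor_comp, LinearMap.comp_assoc]

namespace Coassoc

variable {Δ : C →ₗ[K] C ⊗[K] C}

theorem comulTail_comulTail (hΔ : Coassoc Δ) (f : C →ₗ[K] M) :
    comulTail Δ (comulTail Δ f) = comulHead Δ M ∘ₗ comulTail Δ f := by
  have head_comul : comulHead Δ C ∘ₗ Δ = comulTail Δ Δ := LinearMap.ext hΔ
  have head_natural : comulHead Δ M ∘ₗ LinearMap.lTensor C f =
      LinearMap.lTensor C (LinearMap.lTensor C f) ∘ₗ comulHead Δ C := by
    ext x y
    simp only [TensorProduct.AlgebraTensorModule.curry_apply, LinearMap.restrictScalars_self,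
      TensorProduct.curry_apply, LinearMap.comp_apply, LinearMap.lTensor_tmul, comulHead_tmul]
    induction Δ x using TensorProduct.induction_on with
    | zero => simp
    | tmul a b => simp
    | add s t hs ht => simp only [TensorProduct.add_tmul, map_add, hs, ht]
  calc comulTail Δ (comulTail Δ f)
      = LinearMap.lTensor C (LinearMap.lTensor C f) ∘ₗ comulTail Δ Δ := comulTail_comp Δ _ _
    _ = comulHead Δ M ∘ₗ comulTail Δ f := by
      rw [← head_comul, ← LinearMap.comp_assoc, ← head_natural, LinearMap.comp_assoc, comulTail]

theorem rTensor_comul_comp_comul (hΔ : Coassoc Δ) :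
    LinearMap.rTensor C Δ ∘ₗ Δ =
      (TensorProduct.assoc K C C C).symm.toLinearMap ∘ₗ comulTail Δ Δ := by
  ext c
  exact (LinearEquiv.eq_symm_apply _).2 (hΔ c)

end Coassoc

end Comultiplication

section Contraction

variable {M N : Type*} [AddCommMonoid M] [Module K M] [AddCommMonoid N] [Module K N]

/-- Contraction of the outer factors, `x ⊗ (m ⊗ z) ↦ σ(x, z) m`; it is `contract13` with an
arbitrary module in the middle. -/
def contractEnds (σ : C →ₗ[K] C →ₗ[K] K) : C ⊗[K] (M ⊗[K] C) →ₗ[K] M :=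
  (TensorProduct.rid K M).toLinearMap ∘ₗ
    LinearMap.lTensor M (TensorProduct.lift σ) ∘ₗ
    (TensorProduct.leftComm K C M C).toLinearMap

/-- Contraction of the first and third factors in the presence of further factors collected in `M`,
`x ⊗ (y ⊗ (z ⊗ m)) ↦ σ(x, z) y ⊗ m`. -/
def contractHead (σ : C →ₗ[K] C →ₗ[K] K) : C ⊗[K] (C ⊗[K] (C ⊗[K] M)) →ₗ[K] C ⊗[K] M :=
  LinearMap.rTensor M (contract13 σ) ∘ₗ
    (TensorProduct.assoc K C (C ⊗[K] C) M).symm.toLinearMap ∘ₗ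
    LinearMap.lTensor C (TensorProduct.assoc K C C M).symm.toLinearMap

/-- Contraction of the odd factors against a trilinear form,
`x ⊗ (u ⊗ (d ⊗ (v ⊗ e))) ↦ φ(x, d, e) u ⊗ v`. -/
def contractOdd (φ : C ⊗[K] (C ⊗[K] C) →ₗ[K] K) :
    C ⊗[K] (C ⊗[K] (C ⊗[K] (C ⊗[K] C))) →ₗ[K] C ⊗[K] C :=
  (TensorProduct.rid K (C ⊗[K] C)).toLinearMap ∘ₗ
    LinearMap.lTensor (C ⊗[K] C) φ ∘ₗ
    (TensorProduct.leftComm K C (C ⊗[K] C) (C ⊗[K] C)).toLinearMap ∘ₗ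
    LinearMap.lTensor C ((TensorProduct.assoc K C C (C ⊗[K] C)).symm.toLinearMap ∘ₗ
      LinearMap.lTensor C (TensorProduct.leftComm K C C C).toLinearMap)

@[simp]
theorem contract13_tmul (σ : C →ₗ[K] C →ₗ[K] K) (x y z : C) :
    contract13 σ (x ⊗ₜ (y ⊗ₜ z)) = σ x z • y := by
  simp [contract13, swapFirstTwo]

@[simp]
theorem contractEnds_tmul (σ : C →ₗ[K] C →ₗ[K] K) (x z : C) (m : M) :
    contractEnds σ (x ⊗ₜ (m ⊗ₜ z)) = σ x z • m := by
  simp [contractEnds]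

@[simp]
theorem contractHead_tmul (σ : C →ₗ[K] C →ₗ[K] K) (x y z : C) (m : M) :
    contractHead σ (x ⊗ₜ (y ⊗ₜ (z ⊗ₜ m))) = σ x z • (y ⊗ₜ m) := by
  simp [contractHead, TensorProduct.smul_tmul']

@[simp]
theorem contractOdd_tmul (φ : C ⊗[K] (C ⊗[K] C) →ₗ[K] K) (x u d v e : C) :
    contractOdd φ (x ⊗ₜ (u ⊗ₜ (d ⊗ₜ (v ⊗ₜ e)))) = φ (x ⊗ₜ (d ⊗ₜ e)) • (u ⊗ₜ v) := by
  simp [contractOdd]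

theorem contractOdd_add (φ ψ : C ⊗[K] (C ⊗[K] C) →ₗ[K] K) :
    contractOdd (φ + ψ) = contractOdd φ + contractOdd ψ := by
  simp only [contractOdd, LinearMap.lTensor_add, LinearMap.add_comp, LinearMap.comp_add]

theorem contract13_eq_contractEnds (σ : C →ₗ[K] C →ₗ[K] K) : contract13 σ = contractEnds σ := by
  ext x y z
  simp

theorem comp_contractEnds (σ : C →ₗ[K] C →ₗ[K] K) (f : M →ₗ[K] N) :
    f ∘ₗ contractEnds σ =
      contractEnds σ ∘ₗ LinearMap.lTensor C (LinearMap.rTensor C f) := by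
  ext x m z
  simp

/-- The operator `c ↦ σ(c₁, c₃) c₂` attached to a bilinear form. -/
def sandwich (Δ : C →ₗ[K] C ⊗[K] C) (σ : C →ₗ[K] C →ₗ[K] K) : C →ₗ[K] C :=
  contract13 σ ∘ₗ LinearMap.lTensor C Δ ∘ₗ Δ

theorem contractHead_comp_comulHead (Δ : C →ₗ[K] C ⊗[K] C) (σ : C →ₗ[K] C →ₗ[K] K) :
    contractHead σ ∘ₗ LinearMap.lTensor C (comulHead Δ M) ∘ₗ comulHead Δ M =
      LinearMap.rTensor M (sandwich Δ σ) := by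
  ext x m
  simp only [TensorProduct.AlgebraTensorModule.curry_apply, LinearMap.restrictScalars_self,
    TensorProduct.curry_apply, LinearMap.comp_apply, LinearMap.rTensor_tmul, comulHead_tmul,
    sandwich]
  induction Δ x using TensorProduct.induction_on with
  | zero => simp
  | tmul y z => simp [contractHead]
  | add s t hs ht => simp only [TensorProduct.add_tmul, map_add, hs, ht]

end Contraction

section YangBaxterForms

/-- The form `x ⊗ (d ⊗ e) ↦ ρ(x₁, e) σ(x₂, d)`, the first term of a Yang-Baxter identity. -/
def splitFirstForm (Δ : C →ₗ[K] C ⊗[K] C) (ρ σ : C →ₗ[K] C →ₗ[K] K) :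
    C ⊗[K] (C ⊗[K] C) →ₗ[K] K :=
  LinearMap.mul' K K ∘ₗ TensorProduct.map (TensorProduct.lift ρ) (TensorProduct.lift σ) ∘ₗ
    (TensorProduct.tensorTensorTensorComm K C C C C).toLinearMap ∘ₗ
    TensorProduct.map Δ (TensorProduct.comm K C C).toLinearMap

/-- The form `x ⊗ (d ⊗ e) ↦ ρ(x, d₁) σ(d₂, e)`, the second term of a Yang-Baxter identity. -/
def splitSecondForm (Δ : C →ₗ[K] C ⊗[K] C) (ρ σ : C →ₗ[K] C →ₗ[K] K) :
    C ⊗[K] (C ⊗[K] C) →ₗ[K] K :=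
  LinearMap.mul' K K ∘ₗ TensorProduct.map (TensorProduct.lift ρ) (TensorProduct.lift σ) ∘ₗ
    (TensorProduct.assoc K C C (C ⊗[K] C)).symm.toLinearMap ∘ₗ
    LinearMap.lTensor C (comulHead Δ C)

/-- The form `x ⊗ (d ⊗ e) ↦ ρ(d, e₁) σ(x, e₂)`, the third term of a Yang-Baxter identity. -/
def splitThirdForm (Δ : C →ₗ[K] C ⊗[K] C) (ρ σ : C →ₗ[K] C →ₗ[K] K) :
    C ⊗[K] (C ⊗[K] C) →ₗ[K] K :=
  LinearMap.mul' K K ∘ₗ TensorProduct.map (TensorProduct.lift ρ) (TensorProduct.lift σ) ∘ₗ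
    (TensorProduct.leftComm K C (C ⊗[K] C) C).toLinearMap ∘ₗ
    LinearMap.lTensor C ((TensorProduct.assoc K C C C).symm.toLinearMap ∘ₗ LinearMap.lTensor C Δ)

variable (Δ : C →ₗ[K] C ⊗[K] C) (ρ σ τ : C →ₗ[K] C →ₗ[K] K)

@[simp]
theorem pairApply_tmul (f g : C →ₗ[K] K) (x y : C) : pairApply f g (x ⊗ₜ y) = f x * g y := by
  simp [pairApply]

theorem splitFirstForm_tmul (x d e : C) :
    splitFirstForm Δ ρ σ (x ⊗ₜ (d ⊗ₜ e)) = pairApply (ρ.flip e) (σ.flip d) (Δ x) := by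
  simp only [splitFirstForm, LinearMap.comp_apply, TensorProduct.map_tmul, LinearEquiv.coe_coe,
    TensorProduct.comm_tmul]
  induction Δ x using TensorProduct.induction_on with
  | zero => simp
  | tmul a b => simp
  | add s t hs ht => simp only [TensorProduct.add_tmul, map_add, hs, ht]

theorem splitSecondForm_tmul (x d e : C) :
    splitSecondForm Δ ρ σ (x ⊗ₜ (d ⊗ₜ e)) = pairApply (ρ x) (σ.flip e) (Δ d) := by
  simp only [splitSecondForm, LinearMap.comp_apply, LinearMap.lTensor_tmul, comulHead_tmul]
  induction Δ d using TensorProduct.induction_on with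
  | zero => simp
  | tmul a b => simp
  | add s t hs ht =>
    simp only [TensorProduct.add_tmul, TensorProduct.tmul_add, map_add, hs, ht]

theorem splitThirdForm_tmul (x d e : C) :
    splitThirdForm Δ ρ σ (x ⊗ₜ (d ⊗ₜ e)) = pairApply (ρ d) (σ x) (Δ e) := by
  simp only [splitThirdForm, LinearMap.comp_apply, LinearMap.lTensor_tmul]
  induction Δ e using TensorProduct.induction_on with
  | zero => simp
  | tmul a b => simp
  | add s t hs ht => simp only [TensorProduct.tmul_add, map_add, hs, ht]

variable {Δ ρ σ τ}

theorem splitSecondForm_eq_add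
    (h : ∀ c d e : C, pairApply (ρ.flip e) (σ.flip d) (Δ c)
      - pairApply (ρ c) (ρ.flip e) (Δ d) + pairApply (τ d) (ρ c) (Δ e) = 0) :
    splitSecondForm Δ ρ ρ = splitFirstForm Δ ρ σ + splitThirdForm Δ τ ρ := by
  ext c d e
  change splitSecondForm Δ ρ ρ (c ⊗ₜ (d ⊗ₜ e)) =
    splitFirstForm Δ ρ σ (c ⊗ₜ (d ⊗ₜ e)) + splitThirdForm Δ τ ρ (c ⊗ₜ (d ⊗ₜ e))
  rw [splitFirstForm_tmul, splitSecondForm_tmul, splitThirdForm_tmul]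
  linear_combination -h c d e

variable (Δ ρ σ)

theorem contractOdd_splitFirstForm :
    contractOdd (splitFirstForm Δ ρ σ) =
      contractEnds ρ ∘ₗ
        LinearMap.lTensor C ((TensorProduct.assoc K C C C).symm.toLinearMap ∘ₗ contractHead σ) ∘ₗ
        comulHead Δ _ := by
  ext x u d v e
  simp only [TensorProduct.AlgebraTensorModule.curry_apply, LinearMap.restrictScalars_self,
    TensorProduct.curry_apply, LinearMap.comp_apply, contractOdd_tmul, splitFirstForm_tmul,
    comulHead_tmul]
  induction Δ x using TensorProduct.induction_on with
  | zero => simp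
  | tmul a b => simp [smul_smul, mul_comm]
  | add s t hs ht => simp only [TensorProduct.add_tmul, map_add, add_smul, hs, ht]

theorem contractOdd_splitSecondForm :
    contractOdd (splitSecondForm Δ ρ σ) =
      contractHead ρ ∘ₗ
        LinearMap.lTensor C (LinearMap.lTensor C
          (LinearMap.lTensor C (contract13 σ) ∘ₗ comulHead Δ _)) := by
  ext x u d v e
  simp only [TensorProduct.AlgebraTensorModule.curry_apply, LinearMap.restrictScalars_self,
    TensorProduct.curry_apply, LinearMap.comp_apply, contractOdd_tmul, splitSecondForm_tmul,
    LinearMap.lTensor_tmul, comulHead_tmul]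
  induction Δ d using TensorProduct.induction_on with
  | zero => simp
  | tmul a b => simp [smul_smul, mul_comm]
  | add s t hs ht =>
    simp only [TensorProduct.add_tmul, TensorProduct.tmul_add, map_add, add_smul, hs, ht]

theorem contractOdd_splitThirdForm :
    contractOdd (splitThirdForm Δ ρ σ) =
      contractEnds σ ∘ₗ
        LinearMap.lTensor C ((TensorProduct.assoc K C C C).symm.toLinearMap ∘ₗ
          LinearMap.lTensor C (contractHead ρ ∘ₗ
            LinearMap.lTensor C (LinearMap.lTensor C Δ))) := by
  ext x u d v e
  simp only [TensorProduct.AlgebraTensorModule.curry_apply, LinearMap.restrictScalars_self,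
    TensorProduct.curry_apply, LinearMap.comp_apply, contractOdd_tmul, splitThirdForm_tmul,
    LinearMap.lTensor_tmul]
  induction Δ e using TensorProduct.induction_on with
  | zero => simp
  | tmul a b => simp [smul_smul]
  | add s t hs ht => simp only [TensorProduct.tmul_add, map_add, add_smul, hs, ht]

end YangBaxterForms

section Sandwich

namespace Coassoc

variable {M : Type*} [AddCommMonoid M] [Module K M] {Δ : C →ₗ[K] C ⊗[K] C}

theorem rTensor_sandwich_comp_comulTail (hΔ : Coassoc Δ) (σ : C →ₗ[K] C →ₗ[K] K)
    (f : C →ₗ[K] M) :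
    LinearMap.rTensor M (sandwich Δ σ) ∘ₗ comulTail Δ f =
      contractHead σ ∘ₗ comulTail Δ (comulTail Δ (comulTail Δ f)) := by
  rw [hΔ.comulTail_comulTail f, comulTail_comp, hΔ.comulTail_comulTail f,
    ← contractHead_comp_comulHead]
  rfl

theorem rTensor_sandwich_comp_comul (hΔ : Coassoc Δ) (σ : C →ₗ[K] C →ₗ[K] K) :
    LinearMap.rTensor C (sandwich Δ σ) ∘ₗ Δ =
      contractHead σ ∘ₗ comulTail Δ (comulTail Δ Δ) := by
  simpa only [comulTail_id] using hΔ.rTensor_sandwich_comp_comulTail σ LinearMap.id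

theorem comp_comul_comp_sandwich (hΔ : Coassoc Δ) (ρ : C →ₗ[K] C →ₗ[K] K)
    (g : C ⊗[K] C →ₗ[K] M) :
    g ∘ₗ Δ ∘ₗ sandwich Δ ρ =
      contractEnds ρ ∘ₗ comulTail Δ (LinearMap.rTensor C g ∘ₗ
        (TensorProduct.assoc K C C C).symm.toLinearMap ∘ₗ comulTail Δ Δ) := by
  calc g ∘ₗ Δ ∘ₗ sandwich Δ ρ
      = ((g ∘ₗ Δ) ∘ₗ contractEnds ρ) ∘ₗ comulTail Δ Δ := by
        rw [sandwich, contract13_eq_contractEnds]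
        rfl
    _ = contractEnds ρ ∘ₗ comulTail Δ (LinearMap.rTensor C g ∘ₗ LinearMap.rTensor C Δ ∘ₗ Δ) := by
        rw [comp_contractEnds, LinearMap.comp_assoc, ← comulTail_comp, LinearMap.rTensor_comp,
          LinearMap.comp_assoc]
    _ = _ := by rw [hΔ.rTensor_comul_comp_comul]

theorem map_sandwich_sandwich_comp_comul (hΔ : Coassoc Δ) (ρ σ : C →ₗ[K] C →ₗ[K] K) :
    TensorProduct.map (sandwich Δ ρ) (sandwich Δ σ) ∘ₗ Δ =
      contractOdd (splitSecondForm Δ ρ σ) ∘ₗ comulFive Δ := by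
  calc TensorProduct.map (sandwich Δ ρ) (sandwich Δ σ) ∘ₗ Δ
      = LinearMap.rTensor C (sandwich Δ ρ) ∘ₗ comulTail Δ (sandwich Δ σ) := by
        rw [← LinearMap.rTensor_comp_lTensor, LinearMap.comp_assoc, comulTail]
    _ = contractHead ρ ∘ₗ comulTail Δ (comulTail Δ (LinearMap.lTensor C (contract13 σ) ∘ₗ
          comulTail Δ (comulTail Δ Δ))) := by
        rw [hΔ.rTensor_sandwich_comp_comulTail, ← comulTail_comp]
        rfl
    _ = contractOdd (splitSecondForm Δ ρ σ) ∘ₗ comulFive Δ := by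
        rw [hΔ.comulTail_comulTail Δ, contractOdd_splitSecondForm, comulFive,
          LinearMap.comp_assoc, ← comulTail_comp, ← comulTail_comp, LinearMap.comp_assoc]

theorem rTensor_sandwich_comp_comul_comp_sandwich (hΔ : Coassoc Δ)
    (ρ σ : C →ₗ[K] C →ₗ[K] K) :
    LinearMap.rTensor C (sandwich Δ σ) ∘ₗ Δ ∘ₗ sandwich Δ ρ =
      contractOdd (splitFirstForm Δ ρ σ) ∘ₗ comulFive Δ := by
  have rTensor_rTensor : LinearMap.rTensor C (LinearMap.rTensor C (sandwich Δ σ)) ∘ₗ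
      (TensorProduct.assoc K C C C).symm.toLinearMap =
      (TensorProduct.assoc K C C C).symm.toLinearMap ∘ₗ
        LinearMap.rTensor (C ⊗[K] C) (sandwich Δ σ) := by
    ext x y z
    simp
  calc LinearMap.rTensor C (sandwich Δ σ) ∘ₗ Δ ∘ₗ sandwich Δ ρ
      = contractEnds ρ ∘ₗ comulTail Δ ((TensorProduct.assoc K C C C).symm.toLinearMap ∘ₗ
          LinearMap.rTensor (C ⊗[K] C) (sandwich Δ σ) ∘ₗ comulTail Δ Δ) := by
        rw [hΔ.comp_comul_comp_sandwich, ← LinearMap.comp_assoc, rTensor_rTensor,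
          LinearMap.comp_assoc]
    _ = contractEnds ρ ∘ₗ comulTail Δ (((TensorProduct.assoc K C C C).symm.toLinearMap ∘ₗ
          contractHead σ) ∘ₗ comulFive Δ) := by
        rw [hΔ.rTensor_sandwich_comp_comulTail, ← LinearMap.comp_assoc, comulFive]
    _ = contractEnds ρ ∘ₗ LinearMap.lTensor C ((TensorProduct.assoc K C C C).symm.toLinearMap ∘ₗ
          contractHead σ) ∘ₗ comulHead Δ _ ∘ₗ comulFive Δ := by
        rw [comulTail_comp, comulFive, hΔ.comulTail_comulTail]
    _ = contractOdd (splitFirstForm Δ ρ σ) ∘ₗ comulFive Δ := by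
        rw [contractOdd_splitFirstForm, LinearMap.comp_assoc, LinearMap.comp_assoc]

theorem lTensor_sandwich_comp_comul_comp_sandwich (hΔ : Coassoc Δ)
    (ρ τ : C →ₗ[K] C →ₗ[K] K) :
    LinearMap.lTensor C (sandwich Δ τ) ∘ₗ Δ ∘ₗ sandwich Δ ρ =
      contractOdd (splitThirdForm Δ τ ρ) ∘ₗ comulFive Δ := by
  calc LinearMap.lTensor C (sandwich Δ τ) ∘ₗ Δ ∘ₗ sandwich Δ ρ
      = contractEnds ρ ∘ₗ comulTail Δ ((TensorProduct.assoc K C C C).symm.toLinearMap ∘ₗ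
          comulTail Δ (LinearMap.rTensor C (sandwich Δ τ) ∘ₗ Δ)) := by
        rw [hΔ.comp_comul_comp_sandwich, ← LinearMap.comp_assoc,
          LinearMap.rTensor_lTensor_comp_assoc_symm, LinearMap.comp_assoc, ← comulTail_comp]
    _ = contractEnds ρ ∘ₗ comulTail Δ ((TensorProduct.assoc K C C C).symm.toLinearMap ∘ₗ
          comulTail Δ ((contractHead τ ∘ₗ LinearMap.lTensor C (LinearMap.lTensor C Δ)) ∘ₗ
            comulTail Δ Δ)) := by
        rw [hΔ.rTensor_sandwich_comp_comul, LinearMap.comp_assoc, ← comulTail_comp]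
        rfl
    _ = contractOdd (splitThirdForm Δ τ ρ) ∘ₗ comulFive Δ := by
        rw [comulTail_comp Δ _ (comulTail Δ Δ),
          ← LinearMap.comp_assoc (comulTail Δ (comulTail Δ Δ)), comulTail_comp,
          contractOdd_splitThirdForm, LinearMap.comp_assoc, comulFive]

theorem map_sandwich_comp_comul_eq_add (hΔ : Coassoc Δ) {ρ σ τ : C →ₗ[K] C →ₗ[K] K}
    (h : splitSecondForm Δ ρ ρ = splitFirstForm Δ ρ σ + splitThirdForm Δ τ ρ) :
    TensorProduct.map (sandwich Δ ρ) (sandwich Δ ρ) ∘ₗ Δ =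
      LinearMap.rTensor C (sandwich Δ σ) ∘ₗ Δ ∘ₗ sandwich Δ ρ +
      LinearMap.lTensor C (sandwich Δ τ) ∘ₗ Δ ∘ₗ sandwich Δ ρ := by
  rw [hΔ.map_sandwich_sandwich_comp_comul, h, contractOdd_add,
    LinearMap.add_comp, hΔ.rTensor_sandwich_comp_comul_comp_sandwich,
    hΔ.lTensor_sandwich_comp_comul_comp_sandwich]

end Coassoc

end Sandwich

/-- A coassociative Yang-Baxter pair `(σ, τ)` induces a Rota-Baxter
cosystem via `Q(c) = σ(c₁,c₃)c₂` and `T(c) = τ(c₁,c₃)c₂`. -/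
theorem cosystem_of_cybp
    (Δ : C →ₗ[K] C ⊗[K] C) (hΔ : Coassoc Δ)
    (σ τ : C →ₗ[K] C →ₗ[K] K) (h : IsCYBP Δ σ τ)
    (Q T : C →ₗ[K] C)
    (hQ : Q = contract13 σ ∘ₗ LinearMap.lTensor C Δ ∘ₗ Δ)
    (hT : T = contract13 τ ∘ₗ LinearMap.lTensor C Δ ∘ₗ Δ) :
    IsRBCosystem Δ Q T := by
  have hσ := splitSecondForm_eq_add h.1
  have hτ := splitSecondForm_eq_add h.2
  subst hQ hT
  exact ⟨LinearMap.congr_fun (hΔ.map_sandwich_comp_comul_eq_add hσ),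
    LinearMap.congr_fun (hΔ.map_sandwich_comp_comul_eq_add hτ)⟩

end
end

section
/- Let C be a counital coalgebra over a field K (with counit ε) and let δ₁, δ₂ : C⊗C → C be coderivations (write c∗₁d = δ₁(c⊗d), c∗₂d = δ₂(c⊗d)). Then there exists an associative multiplication μ : C⊗C → C that is a covariant coderivation with respect to (δ₁, δ₂) if and only if there exists a bilinear form u : C × C → K such that, for all c, d, e ∈ C: (i) c∗₁d − c∗₂d = c₁ u(c₂, d) − u(c, d₁) d₂; (ii) (c∗₁d)∗₁e − c∗₁(d∗₁e) = u(d, e₁) (c∗₁e₂); (iii) u(c∗₁d, e) − u(c, d∗₁e) = u(d, e₁)u(c, e₂) − u(c, d₁)u(d₂, e). In this case μ is given by μ(c⊗d) = u(c, d₁)d₂ + c∗₁d = c₁u(c₂, d) + c∗₂d. -/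
open TensorProduct

noncomputable section

variable {K : Type*} [Field K] {C : Type*} [AddCommGroup C] [Module K C]

/-!
If `μ` is covariant, applying `ε ⊗ id` to the first covariance identity and `id ⊗ ε` to the second
recovers `μ` from `u = ε ∘ μ` as `c d = u(c, d₁) d₂ + c ∗₁ d = c₁ u(c₂, d) + c ∗₂ d`; condition (i)
says that these two expressions agree. Conversely, a product of this shape is covariant by
coassociativity. Condition (iii) says that `u(c d, e) = u(c, d e)`. Granting this, the terms of the
associator `(c d) e - c (d e)` containing `u(c d, e₁) e₂`, `u(c, d e₁) e₂` and `u(c, d₁) (d₂ ∗₁ e)`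
cancel, and what remains vanishes exactly when (ii) holds.
-/

section Slice

variable {R M N P : Type*} [CommSemiring R] [AddCommMonoid M] [AddCommMonoid N] [AddCommMonoid P]
  [Module R M] [Module R N] [Module R P]

/-- The slice map `f ⊗ id : M ⊗ N → N`, i.e. `x ⊗ y ↦ f x • y`. Composed with a comultiplication it
is the Sweedler expression `f(c₁) c₂`. -/
def leftSlice (f : M →ₗ[R] R) : M ⊗[R] N →ₗ[R] N :=
  (TensorProduct.lid R N).toLinearMap ∘ₗ LinearMap.rTensor N f

/-- The slice map `id ⊗ f : M ⊗ N → M`, i.e. `x ⊗ y ↦ f y • x`. Composed with a comultiplication it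
is the Sweedler expression `c₁ f(c₂)`. -/
def rightSlice (f : N →ₗ[R] R) : M ⊗[R] N →ₗ[R] M :=
  (TensorProduct.rid R M).toLinearMap ∘ₗ LinearMap.lTensor M f

@[simp]
lemma leftSlice_tmul (f : M →ₗ[R] R) (x : M) (y : N) : leftSlice f (x ⊗ₜ[R] y) = f x • y := rfl

@[simp]
lemma rightSlice_tmul (f : N →ₗ[R] R) (x : M) (y : N) : rightSlice f (x ⊗ₜ[R] y) = f y • x := rfl

lemma lid_map_eq_apply_leftSlice (f : M →ₗ[R] R) (g : N →ₗ[R] P) (t : M ⊗[R] N) :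
    TensorProduct.lid R P (TensorProduct.map f g t) = g (leftSlice f t) := by
  induction t <;> simp_all

lemma leftSlice_lTensor (f : M →ₗ[R] R) (g : N →ₗ[R] P) (t : M ⊗[R] N) :
    leftSlice f (LinearMap.lTensor M g t) = g (leftSlice f t) := by
  induction t <;> simp_all

lemma rightSlice_rTensor (f : N →ₗ[R] R) (g : M →ₗ[R] P) (t : M ⊗[R] N) :
    rightSlice f (LinearMap.rTensor N g t) = g (rightSlice f t) := by
  induction t <;> simp_all

lemma leftSlice_rTensor (f : P →ₗ[R] R) (g : M →ₗ[R] P) (t : M ⊗[R] N) :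
    leftSlice f (LinearMap.rTensor N g t) = leftSlice (f ∘ₗ g) t := by
  induction t <;> simp_all

lemma rightSlice_lTensor (f : P →ₗ[R] R) (g : N →ₗ[R] P) (t : M ⊗[R] N) :
    rightSlice f (LinearMap.lTensor M g t) = rightSlice (f ∘ₗ g) t := by
  induction t <;> simp_all

lemma leftSlice_comp_assoc (f : M →ₗ[R] R) :
    leftSlice f ∘ₗ (TensorProduct.assoc R M N P).toLinearMap =
      LinearMap.rTensor P (leftSlice f) := by
  ext; simp [TensorProduct.smul_tmul']

lemma rightSlice_comp_assoc_symm (f : P →ₗ[R] R) :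
    rightSlice f ∘ₗ (TensorProduct.assoc R M N P).symm.toLinearMap =
      LinearMap.lTensor M (rightSlice f) := by
  ext; simp

lemma leftSlice_lift_assoc_symm (u : M →ₗ[R] N →ₗ[R] R) (x : M) (t : N ⊗[R] P) :
    leftSlice (TensorProduct.lift u) ((TensorProduct.assoc R M N P).symm (x ⊗ₜ t)) =
      leftSlice (u x) t := by
  induction t <;> simp_all [TensorProduct.tmul_add]

lemma rightSlice_lift_assoc (u : N →ₗ[R] P →ₗ[R] R) (t : M ⊗[R] N) (z : P) :
    rightSlice (TensorProduct.lift u) (TensorProduct.assoc R M N P (t ⊗ₜ z)) =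
      rightSlice (u.flip z) t := by
  induction t <;> simp_all [TensorProduct.add_tmul]

end Slice

lemma pairApply_eq_apply_leftSlice (f g : C →ₗ[K] K) (t : C ⊗[K] C) :
    pairApply f g t = g (leftSlice f t) := by
  induction t <;> simp_all [pairApply]

section FormMul

variable {Δ : C →ₗ[K] C ⊗[K] C} {ε : C →ₗ[K] K} {δ δ₁ δ₂ μ : C ⊗[K] C →ₗ[K] C}
  {u : C →ₗ[K] C →ₗ[K] K}

lemma IsCounit.leftSlice_comul (hε : IsCounit Δ ε) (c : C) : leftSlice ε (Δ c) = c :=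
  (hε c).1

lemma IsCounit.rightSlice_comul (hε : IsCounit Δ ε) (c : C) : rightSlice ε (Δ c) = c :=
  (hε c).2

lemma Coassoc.comul_leftSlice (hΔ : Coassoc Δ) (f : C →ₗ[K] K) (c : C) :
    Δ (leftSlice f (Δ c)) = LinearMap.rTensor C (leftSlice f ∘ₗ Δ) (Δ c) :=
  calc Δ (leftSlice f (Δ c))
      = leftSlice f (LinearMap.lTensor C Δ (Δ c)) := (leftSlice_lTensor ..).symm
    _ = leftSlice f (TensorProduct.assoc K C C C (LinearMap.rTensor C Δ (Δ c))) :=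
        congrArg (leftSlice f) (hΔ c).symm
    _ = LinearMap.rTensor C (leftSlice f) (LinearMap.rTensor C Δ (Δ c)) :=
        LinearMap.congr_fun (leftSlice_comp_assoc f) _
    _ = LinearMap.rTensor C (leftSlice f ∘ₗ Δ) (Δ c) := (LinearMap.rTensor_comp_apply ..).symm

lemma Coassoc.comul_rightSlice (hΔ : Coassoc Δ) (f : C →ₗ[K] K) (c : C) :
    Δ (rightSlice f (Δ c)) = LinearMap.lTensor C (rightSlice f ∘ₗ Δ) (Δ c) :=
  calc Δ (rightSlice f (Δ c))
      = rightSlice f (LinearMap.rTensor C Δ (Δ c)) := (rightSlice_rTensor ..).symm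
    _ = rightSlice f ((TensorProduct.assoc K C C C).symm (LinearMap.lTensor C Δ (Δ c))) :=
        congrArg (rightSlice f) ((LinearEquiv.eq_symm_apply _).2 (hΔ c))
    _ = LinearMap.lTensor C (rightSlice f) (LinearMap.lTensor C Δ (Δ c)) :=
        LinearMap.congr_fun (rightSlice_comp_assoc_symm f) _
    _ = LinearMap.lTensor C (rightSlice f ∘ₗ Δ) (Δ c) := (LinearMap.lTensor_comp_apply ..).symm

/-- The product `c ⊗ d ↦ u(c, d₁) d₂ + δ(c ⊗ d)`. With `δ = δ₁` it is the candidate for `μ` attached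
to a bilinear form `u`. -/
def leftFormMul (Δ : C →ₗ[K] C ⊗[K] C) (δ : C ⊗[K] C →ₗ[K] C) (u : C →ₗ[K] C →ₗ[K] K) :
    C ⊗[K] C →ₗ[K] C :=
  leftSlice (TensorProduct.lift u) ∘ₗ (TensorProduct.assoc K C C C).symm.toLinearMap ∘ₗ
    LinearMap.lTensor C Δ + δ

/-- The product `c ⊗ d ↦ c₁ u(c₂, d) + δ(c ⊗ d)`. With `δ = δ₂` it is the second expression for the
`μ` attached to a bilinear form `u`. -/
def rightFormMul (Δ : C →ₗ[K] C ⊗[K] C) (δ : C ⊗[K] C →ₗ[K] C) (u : C →ₗ[K] C →ₗ[K] K) :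
    C ⊗[K] C →ₗ[K] C :=
  rightSlice (TensorProduct.lift u) ∘ₗ (TensorProduct.assoc K C C C).toLinearMap ∘ₗ
    LinearMap.rTensor C Δ + δ

lemma leftFormMul_tmul (c d : C) :
    leftFormMul Δ δ u (c ⊗ₜ d) = leftSlice (u c) (Δ d) + δ (c ⊗ₜ d) := by
  simp [leftFormMul, leftSlice_lift_assoc_symm]

lemma rightFormMul_tmul (c d : C) :
    rightFormMul Δ δ u (c ⊗ₜ d) = rightSlice (u.flip d) (Δ c) + δ (c ⊗ₜ d) := by
  simp [rightFormMul, rightSlice_lift_assoc]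

lemma leftFormMul_eq_rightFormMul_iff :
    leftFormMul Δ δ₁ u = rightFormMul Δ δ₂ u ↔
      ∀ c d : C, δ₁ (c ⊗ₜ d) - δ₂ (c ⊗ₜ d) =
        rightSlice (u.flip d) (Δ c) - leftSlice (u c) (Δ d) := by
  simp only [sub_eq_sub_iff_add_eq_add, add_comm (δ₁ _), ← leftFormMul_tmul, ← rightFormMul_tmul]
  exact ⟨fun h c d ↦ by rw [h], TensorProduct.ext'⟩

lemma IsCoderivation.comul_leftFormMul (hδ : IsCoderivation Δ δ) (hΔ : Coassoc Δ) (c d : C) :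
    Δ (leftFormMul Δ δ u (c ⊗ₜ d)) =
      LinearMap.rTensor C (leftFormMul Δ δ u ∘ₗ TensorProduct.mk K C C c) (Δ d) +
        LinearMap.lTensor C (δ ∘ₗ (TensorProduct.mk K C C).flip d) (Δ c) := by
  have mul_left : leftFormMul Δ δ u ∘ₗ TensorProduct.mk K C C c =
      leftSlice (u c) ∘ₗ Δ + δ ∘ₗ TensorProduct.mk K C C c :=
    LinearMap.ext fun d ↦ leftFormMul_tmul c d
  rw [mul_left, leftFormMul_tmul, map_add, hΔ.comul_leftSlice, hδ, LinearMap.rTensor_add,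
    LinearMap.add_apply]
  abel

lemma IsCoderivation.comul_rightFormMul (hδ : IsCoderivation Δ δ) (hΔ : Coassoc Δ) (c d : C) :
    Δ (rightFormMul Δ δ u (c ⊗ₜ d)) =
      LinearMap.lTensor C (rightFormMul Δ δ u ∘ₗ (TensorProduct.mk K C C).flip d) (Δ c) +
        LinearMap.rTensor C (δ ∘ₗ TensorProduct.mk K C C c) (Δ d) := by
  have mul_right : rightFormMul Δ δ u ∘ₗ (TensorProduct.mk K C C).flip d =
      rightSlice (u.flip d) ∘ₗ Δ + δ ∘ₗ (TensorProduct.mk K C C).flip d :=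
    LinearMap.ext fun c ↦ rightFormMul_tmul c d
  rw [mul_right, rightFormMul_tmul, map_add, hΔ.comul_rightSlice, hδ, LinearMap.lTensor_add,
    LinearMap.add_apply, add_assoc]

lemma isCovariant_leftFormMul (hΔ : Coassoc Δ) (hδ₁ : IsCoderivation Δ δ₁)
    (hδ₂ : IsCoderivation Δ δ₂) (hu : leftFormMul Δ δ₁ u = rightFormMul Δ δ₂ u) :
    IsCovariant Δ δ₁ δ₂ (leftFormMul Δ δ₁ u) :=
  ⟨hδ₁.comul_leftFormMul hΔ, hu ▸ hδ₂.comul_rightFormMul hΔ⟩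

lemma IsCovariant.eq_leftFormMul (hμ : IsCovariant Δ δ₁ δ₂ μ) (hε : IsCounit Δ ε) :
    μ = leftFormMul Δ δ₁ (TensorProduct.curry (ε ∘ₗ μ)) := by
  refine TensorProduct.ext' fun c d ↦ ?_
  calc μ (c ⊗ₜ d)
      = leftSlice ε (Δ (μ (c ⊗ₜ d))) := (hε.leftSlice_comul _).symm
    _ = leftSlice (TensorProduct.curry (ε ∘ₗ μ) c) (Δ d) + δ₁ (c ⊗ₜ d) := by
        rw [hμ.1, map_add, leftSlice_rTensor, leftSlice_lTensor, hε.leftSlice_comul]; rfl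
    _ = leftFormMul Δ δ₁ (TensorProduct.curry (ε ∘ₗ μ)) (c ⊗ₜ d) :=
        (leftFormMul_tmul c d).symm

lemma IsCovariant.eq_rightFormMul (hμ : IsCovariant Δ δ₁ δ₂ μ) (hε : IsCounit Δ ε) :
    μ = rightFormMul Δ δ₂ (TensorProduct.curry (ε ∘ₗ μ)) := by
  refine TensorProduct.ext' fun c d ↦ ?_
  calc μ (c ⊗ₜ d)
      = rightSlice ε (Δ (μ (c ⊗ₜ d))) := (hε.rightSlice_comul _).symm
    _ = rightSlice ((TensorProduct.curry (ε ∘ₗ μ)).flip d) (Δ c) + δ₂ (c ⊗ₜ d) := by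
        rw [hμ.2, map_add, rightSlice_lTensor, rightSlice_rTensor, hε.rightSlice_comul]; rfl
    _ = rightFormMul Δ δ₂ (TensorProduct.curry (ε ∘ₗ μ)) (c ⊗ₜ d) :=
        (rightFormMul_tmul c d).symm

/-- The bilinear form `u` is associative (also called invariant) for the product `μ`:
`u(c d, e) = u(c, d e)`. -/
def IsAssocForm (μ : C ⊗[K] C →ₗ[K] C) (u : C →ₗ[K] C →ₗ[K] K) : Prop :=
  ∀ c d e : C, u (μ (c ⊗ₜ d)) e = u c (μ (d ⊗ₜ e))

lemma IsAssocMul.isAssocForm_curry (hμ : IsAssocMul μ) (f : C →ₗ[K] K) :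
    IsAssocForm μ (TensorProduct.curry (f ∘ₗ μ)) :=
  fun c d e ↦ congrArg f (hμ c d e)

lemma isAssocForm_leftFormMul_iff :
    IsAssocForm (leftFormMul Δ δ u) u ↔
      ∀ c d e : C, u (δ (c ⊗ₜ d)) e - u c (δ (d ⊗ₜ e)) =
        pairApply (u d) (u c) (Δ e) - pairApply (u c) (u.flip e) (Δ d) := by
  refine forall₃_congr fun c d e ↦ ?_
  simp only [leftFormMul_tmul, pairApply_eq_apply_leftSlice, map_add, LinearMap.add_apply,
    LinearMap.flip_apply]
  rw [sub_eq_sub_iff_add_eq_add, add_comm]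

lemma leftFormMul_leftFormMul_tmul (c d e : C) :
    leftFormMul Δ δ u (leftFormMul Δ δ u (c ⊗ₜ d) ⊗ₜ e) =
      leftSlice (u (leftFormMul Δ δ u (c ⊗ₜ d))) (Δ e) +
        δ (leftSlice (u c) (Δ d) ⊗ₜ e) + δ (δ (c ⊗ₜ d) ⊗ₜ e) := by
  rw [leftFormMul_tmul (leftFormMul Δ δ u (c ⊗ₜ d)), add_assoc, ← map_add,
    ← TensorProduct.add_tmul, ← leftFormMul_tmul c]

lemma leftFormMul_tmul_leftFormMul (hμ : IsCovariant Δ δ₁ δ₂ (leftFormMul Δ δ₁ u)) (c d e : C) :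
    leftFormMul Δ δ₁ u (c ⊗ₜ leftFormMul Δ δ₁ u (d ⊗ₜ e)) =
      leftSlice (u c ∘ₗ leftFormMul Δ δ₁ u ∘ₗ TensorProduct.mk K C C d) (Δ e) +
        δ₁ (leftSlice (u c) (Δ d) ⊗ₜ e) +
        (δ₁ (c ⊗ₜ leftSlice (u d) (Δ e)) + δ₁ (c ⊗ₜ δ₁ (d ⊗ₜ e))) := by
  rw [leftFormMul_tmul c, hμ.1, map_add, leftSlice_rTensor, leftSlice_lTensor, ← map_add δ₁,
    ← TensorProduct.tmul_add, ← leftFormMul_tmul]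
  rfl

lemma isAssocMul_leftFormMul_iff (hμ : IsCovariant Δ δ₁ δ₂ (leftFormMul Δ δ₁ u))
    (hu : IsAssocForm (leftFormMul Δ δ₁ u) u) :
    IsAssocMul (leftFormMul Δ δ₁ u) ↔
      ∀ c d e : C, δ₁ (δ₁ (c ⊗ₜ d) ⊗ₜ e) - δ₁ (c ⊗ₜ δ₁ (d ⊗ₜ e)) =
        TensorProduct.lid K C
          (TensorProduct.map (u d) (δ₁ ∘ₗ TensorProduct.mk K C C c) (Δ e)) := by
  refine forall₃_congr fun c d e ↦ ?_
  have form_mul : u (leftFormMul Δ δ₁ u (c ⊗ₜ d)) =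
      u c ∘ₗ leftFormMul Δ δ₁ u ∘ₗ TensorProduct.mk K C C d :=
    LinearMap.ext (hu c d)
  rw [leftFormMul_leftFormMul_tmul, leftFormMul_tmul_leftFormMul hμ, form_mul, add_right_inj,
    lid_map_eq_apply_leftSlice, sub_eq_iff_eq_add]
  rfl

lemma IsCovariant.uCond_curry (hμ : IsCovariant Δ δ₁ δ₂ μ) (hassoc : IsAssocMul μ)
    (hε : IsCounit Δ ε) : UCond Δ δ₁ δ₂ (TensorProduct.curry (ε ∘ₗ μ)) := by
  have left_eq := hμ.eq_leftFormMul hε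
  have right_eq := hμ.eq_rightFormMul hε
  have form_assoc := hassoc.isAssocForm_curry ε
  generalize TensorProduct.curry (ε ∘ₗ μ) = u at left_eq right_eq form_assoc ⊢
  subst left_eq
  exact ⟨leftFormMul_eq_rightFormMul_iff.1 right_eq,
    (isAssocMul_leftFormMul_iff hμ form_assoc).1 hassoc,
    isAssocForm_leftFormMul_iff.1 form_assoc⟩

end FormMul

/-- Theorem 4.11: existence of an associative covariant
coderivation `μ` w.r.t. `(δ₁, δ₂)` is equivalent to existence of a bilinear form
`u` satisfying (4.11)-(4.13); in this case `μ` is given by (4.14). -/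
theorem covariant_coderivation_iff_bilinear_form
    (Δ : C →ₗ[K] C ⊗[K] C) (hΔ : Coassoc Δ)
    (ε : C →ₗ[K] K) (hε : IsCounit Δ ε)
    (δ₁ δ₂ : C ⊗[K] C →ₗ[K] C)
    (h1 : IsCoderivation Δ δ₁) (h2 : IsCoderivation Δ δ₂) :
    ((∃ μ : C ⊗[K] C →ₗ[K] C, IsAssocMul μ ∧ IsCovariant Δ δ₁ δ₂ μ) ↔
      ∃ u : C →ₗ[K] C →ₗ[K] K, UCond Δ δ₁ δ₂ u) ∧
    (∀ μ : C ⊗[K] C →ₗ[K] C, IsAssocMul μ → IsCovariant Δ δ₁ δ₂ μ →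
      ∃ u : C →ₗ[K] C →ₗ[K] K, UCond Δ δ₁ δ₂ u ∧
        ∀ c d : C,
          μ (c ⊗ₜ d) = (TensorProduct.lid K C) (LinearMap.rTensor C (u c) (Δ d)) +
            δ₁ (c ⊗ₜ d) ∧
          μ (c ⊗ₜ d) = (TensorProduct.rid K C) (LinearMap.lTensor C (u.flip d) (Δ c)) +
            δ₂ (c ⊗ₜ d)) := by
  refine ⟨⟨?_, ?_⟩, fun μ hassoc hμ ↦ ⟨_, hμ.uCond_curry hassoc hε, fun c d ↦ ⟨?_, ?_⟩⟩⟩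
  · rintro ⟨μ, hassoc, hμ⟩
    exact ⟨_, hμ.uCond_curry hassoc hε⟩
  · rintro ⟨u, sub_eq, associator_eq, form_eq⟩
    have hμ : IsCovariant Δ δ₁ δ₂ (leftFormMul Δ δ₁ u) :=
      isCovariant_leftFormMul hΔ h1 h2 (leftFormMul_eq_rightFormMul_iff.2 sub_eq)
    have hu : IsAssocForm (leftFormMul Δ δ₁ u) u := isAssocForm_leftFormMul_iff.2 form_eq
    exact ⟨_, (isAssocMul_leftFormMul_iff hμ hu).2 associator_eq, hμ⟩
  · exact (LinearMap.congr_fun (hμ.eq_leftFormMul hε) _).trans (leftFormMul_tmul c d)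
  · exact (LinearMap.congr_fun (hμ.eq_rightFormMul hε) _).trans (rightFormMul_tmul c d)

end
end

section
/- Let C be a counital coalgebra over a field K (with counit ε), let δ₁, δ₂ : C⊗C → C be coderivations (write c∗₁d = δ₁(c⊗d), c∗₂d = δ₂(c⊗d)) and let μ : C⊗C → C be a linear map. Then (C, δ₁, δ₂, μ) is a counital covariant bialgebra if and only if, for all c, d, e ∈ C: (i) c∗₁d − c∗₂d = c ε(d) − ε(c) d; (ii) (c∗₁d)∗₁e − c∗₁(d∗₁e) = ε(d) (c∗₁e); and (iii) μ(c⊗d) = ε(c)d + c∗₁d. -/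
open TensorProduct

noncomputable section

variable {K : Type*} [Field K] {C : Type*} [AddCommGroup C] [Module K C]

/-!
Applying `ε ⊗ id` to the first covariance identity and `id ⊗ ε` to the second one gives
`cd = ε(c)d + c ∗₁ d` and `cd = cε(d) + c ∗₂ d`, and comparing the two yields (i). Given these
formulas, the terms `ε(c)d` and `cε(d)` cancel from the covariance identities, which become the
statements that `δ₁` and `δ₂` are coderivations. Every coderivation `δ` satisfies `ε ∘ δ = 0`, so
expanding `(cd)e = c(de)` leaves exactly (ii).

In the converse direction `δ₂` is a coderivation because it differs from `δ₁` by the coderivation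
`c ⊗ d ↦ ε(d)c - ε(c)d`.
-/

theorem apply_lid_map_eq_apply_rid_map {R M N : Type*} [CommSemiring R] [AddCommMonoid M]
    [AddCommMonoid N] [Module R M] [Module R N] (f : M →ₗ[R] R) (g : N →ₗ[R] R) (x : M ⊗[R] N) :
    g (TensorProduct.lid R N (TensorProduct.map f LinearMap.id x)) =
      f (TensorProduct.rid R M (TensorProduct.map LinearMap.id g x)) := by
  induction x with
  | zero => simp
  | tmul a b => simp [mul_comm]
  | add a b ha hb => simp only [map_add, ha, hb]

section Counit

variable {Δ : C →ₗ[K] C ⊗[K] C} {ε : C →ₗ[K] K} {M : Type*} [AddCommMonoid M] [Module K M]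

theorem IsCounit.lid_map_lTensor (hε : IsCounit Δ ε) (f : C →ₗ[K] M) (c : C) :
    TensorProduct.lid K M (TensorProduct.map ε LinearMap.id (LinearMap.lTensor C f (Δ c))) =
      f c := by
  have naturality : (TensorProduct.lid K M).toLinearMap ∘ₗ TensorProduct.map ε LinearMap.id ∘ₗ
      LinearMap.lTensor C f =
        f ∘ₗ (TensorProduct.lid K C).toLinearMap ∘ₗ TensorProduct.map ε LinearMap.id := by
    ext; simp
  exact (LinearMap.congr_fun naturality (Δ c)).trans (congrArg f (hε c).1)

theorem IsCounit.rid_map_rTensor (hε : IsCounit Δ ε) (f : C →ₗ[K] M) (c : C) :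
    TensorProduct.rid K M (TensorProduct.map LinearMap.id ε (LinearMap.rTensor C f (Δ c))) =
      f c := by
  have naturality : (TensorProduct.rid K M).toLinearMap ∘ₗ TensorProduct.map LinearMap.id ε ∘ₗ
      LinearMap.rTensor C f =
        f ∘ₗ (TensorProduct.rid K C).toLinearMap ∘ₗ TensorProduct.map LinearMap.id ε := by
    ext; simp
  exact (LinearMap.congr_fun naturality (Δ c)).trans (congrArg f (hε c).2)

theorem IsCounit.lTensor_smulRight (hε : IsCounit Δ ε) (m : M) (c : C) :
    LinearMap.lTensor C (ε.smulRight m) (Δ c) = c ⊗ₜ[K] m := by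
  have factorization : LinearMap.lTensor C (ε.smulRight m) =
      (TensorProduct.mk K C M).flip m ∘ₗ (TensorProduct.rid K C).toLinearMap ∘ₗ
        TensorProduct.map LinearMap.id ε := by
    ext; simp
  rw [factorization]
  exact congrArg (· ⊗ₜ[K] m) (hε c).2

theorem IsCounit.rTensor_smulRight (hε : IsCounit Δ ε) (m : M) (c : C) :
    LinearMap.rTensor C (ε.smulRight m) (Δ c) = m ⊗ₜ[K] c := by
  have factorization : LinearMap.rTensor C (ε.smulRight m) =
      TensorProduct.mk K M C m ∘ₗ (TensorProduct.lid K C).toLinearMap ∘ₗ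
        TensorProduct.map ε LinearMap.id := by
    ext; simp [smul_tmul]
  rw [factorization]
  exact congrArg (m ⊗ₜ[K] ·) (hε c).1

theorem IsCounit.lid_map_rTensor_of_comp_eq_smul (hε : IsCounit Δ ε) {f : C →ₗ[K] M}
    {η : M →ₗ[K] K} {k : K} (hf : η ∘ₗ f = k • ε) (c : C) :
    TensorProduct.lid K C (TensorProduct.map η LinearMap.id (LinearMap.rTensor C f (Δ c))) =
      k • c := by
  rw [LinearMap.map_rTensor, hf, TensorProduct.map_smul_left, LinearMap.smul_apply, map_smul,
    (hε c).1]

theorem IsCounit.rid_map_lTensor_of_comp_eq_smul (hε : IsCounit Δ ε) {f : C →ₗ[K] M}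
    {η : M →ₗ[K] K} {k : K} (hf : η ∘ₗ f = k • ε) (c : C) :
    TensorProduct.rid K C (TensorProduct.map LinearMap.id η (LinearMap.lTensor C f (Δ c))) =
      k • c := by
  rw [LinearMap.map_lTensor, hf, TensorProduct.map_smul_right, LinearMap.smul_apply, map_smul,
    (hε c).2]

end Counit

section Coderivation

variable {Δ : C →ₗ[K] C ⊗[K] C} {ε : C →ₗ[K] K} {δ δ₁ δ₂ μ : C ⊗[K] C →ₗ[K] C}

theorem IsCoderivation.counit_apply_tmul (hδ : IsCoderivation Δ δ) (hε : IsCounit Δ ε) (c d : C) :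
    ε (δ (c ⊗ₜ d)) = 0 := by
  have left_counit := (hε (δ (c ⊗ₜ d))).1
  rw [hδ, map_add, map_add, hε.lid_map_lTensor] at left_counit
  have counit_sum_eq := congrArg ε left_counit
  rw [map_add, apply_lid_map_eq_apply_rid_map, hε.rid_map_rTensor] at counit_sum_eq
  simpa using counit_sum_eq

theorem IsCoderivation.of_sub_eq (hδ₁ : IsCoderivation Δ δ₁) (hε : IsCounit Δ ε)
    (hsub : ∀ c d : C, δ₁ (c ⊗ₜ d) - δ₂ (c ⊗ₜ d) = ε d • c - ε c • d) :
    IsCoderivation Δ δ₂ := by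
  have hδ₂ (c d : C) : δ₂ (c ⊗ₜ d) = δ₁ (c ⊗ₜ d) - (ε d • c - ε c • d) := by
    rw [← hsub, sub_sub_cancel]
  intro c d
  have right_mul : δ₂ ∘ₗ (TensorProduct.mk K C C).flip d =
      δ₁ ∘ₗ (TensorProduct.mk K C C).flip d - (ε d • LinearMap.id - ε.smulRight d) := by
    ext a; simp [hδ₂]
  have left_mul : δ₂ ∘ₗ TensorProduct.mk K C C c =
      δ₁ ∘ₗ TensorProduct.mk K C C c - (ε.smulRight c - ε c • LinearMap.id) := by
    ext a; simp [hδ₂]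
  rw [right_mul, left_mul, hδ₂, map_sub, hδ₁ c d]
  simp only [LinearMap.lTensor_sub, LinearMap.rTensor_sub, LinearMap.lTensor_smul,
    LinearMap.rTensor_smul, LinearMap.lTensor_id, LinearMap.rTensor_id, LinearMap.sub_apply,
    LinearMap.smul_apply, LinearMap.id_apply, hε.lTensor_smulRight, hε.rTensor_smulRight,
    map_sub, map_smul]
  abel

theorem isCovariant_iff_isCoderivation
    (hleft : ∀ c d : C, μ (c ⊗ₜ d) = ε c • d + δ₁ (c ⊗ₜ d))
    (hright : ∀ c d : C, μ (c ⊗ₜ d) = ε d • c + δ₂ (c ⊗ₜ d)) :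
    IsCovariant Δ δ₁ δ₂ μ ↔ IsCoderivation Δ δ₁ ∧ IsCoderivation Δ δ₂ := by
  have left_mul (c : C) : μ ∘ₗ TensorProduct.mk K C C c =
      ε c • LinearMap.id + δ₁ ∘ₗ TensorProduct.mk K C C c := by
    ext a; simp [hleft]
  have right_mul (d : C) : μ ∘ₗ (TensorProduct.mk K C C).flip d =
      ε d • LinearMap.id + δ₂ ∘ₗ (TensorProduct.mk K C C).flip d := by
    ext a; simp [hright]
  refine and_congr (forall₂_congr fun c d => ?_) (forall₂_congr fun c d => ?_)
  · rw [hleft, left_mul, map_add, map_smul, LinearMap.rTensor_add, LinearMap.rTensor_smul,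
      LinearMap.rTensor_id, LinearMap.add_apply, LinearMap.smul_apply, LinearMap.id_apply,
      add_assoc, add_right_inj, add_comm (LinearMap.rTensor C _ _)]
  · rw [hright, right_mul, map_add, map_smul, LinearMap.lTensor_add, LinearMap.lTensor_smul,
      LinearMap.lTensor_id, LinearMap.add_apply, LinearMap.smul_apply, LinearMap.id_apply,
      add_assoc, add_right_inj]

theorem IsCovariant.apply_tmul_eq_left (hμ : IsCovariant Δ δ₁ δ₂ μ) (hε : IsCounit Δ ε)
    (hmul : ∀ c d : C, ε (μ (c ⊗ₜ d)) = ε c * ε d) (c d : C) :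
    μ (c ⊗ₜ d) = ε c • d + δ₁ (c ⊗ₜ d) := by
  have counit_left_mul : ε ∘ₗ μ ∘ₗ TensorProduct.mk K C C c = ε c • ε :=
    LinearMap.ext fun a => hmul c a
  have left_counit := (hε (μ (c ⊗ₜ d))).1
  rw [hμ.1, map_add, map_add, hε.lid_map_lTensor,
    hε.lid_map_rTensor_of_comp_eq_smul counit_left_mul] at left_counit
  exact left_counit.symm

theorem IsCovariant.apply_tmul_eq_right (hμ : IsCovariant Δ δ₁ δ₂ μ) (hε : IsCounit Δ ε)
    (hmul : ∀ c d : C, ε (μ (c ⊗ₜ d)) = ε c * ε d) (c d : C) :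
    μ (c ⊗ₜ d) = ε d • c + δ₂ (c ⊗ₜ d) := by
  have counit_right_mul : ε ∘ₗ μ ∘ₗ (TensorProduct.mk K C C).flip d = ε d • ε :=
    LinearMap.ext fun a => (hmul a d).trans (mul_comm _ _)
  have right_counit := (hε (μ (c ⊗ₜ d))).2
  rw [hμ.2, map_add, map_add, hε.rid_map_rTensor,
    hε.rid_map_lTensor_of_comp_eq_smul counit_right_mul] at right_counit
  exact right_counit.symm

theorem isAssocMul_iff_of_apply_tmul_eq
    (hμ : ∀ c d : C, μ (c ⊗ₜ d) = ε c • d + δ (c ⊗ₜ d)) (hεδ : ∀ c d : C, ε (δ (c ⊗ₜ d)) = 0) :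
    IsAssocMul μ ↔ ∀ c d e : C,
      δ (δ (c ⊗ₜ d) ⊗ₜ e) - δ (c ⊗ₜ δ (d ⊗ₜ e)) = ε d • δ (c ⊗ₜ e) := by
  refine forall₃_congr fun c d e => ?_
  have associator_eq : μ (μ (c ⊗ₜ d) ⊗ₜ e) - μ (c ⊗ₜ μ (d ⊗ₜ e)) =
      δ (δ (c ⊗ₜ d) ⊗ₜ e) - δ (c ⊗ₜ δ (d ⊗ₜ e)) - ε d • δ (c ⊗ₜ e) := by
    simp only [hμ, hεδ, map_add, map_smul, add_tmul, tmul_add, ← smul_tmul', tmul_smul]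
    module
  rw [← sub_eq_zero, associator_eq, sub_eq_zero]

end Coderivation

theorem counital_covariant_bialgebra_iff_general
    (Δ : C →ₗ[K] C ⊗[K] C) (ε : C →ₗ[K] K) (hε : IsCounit Δ ε)
    (δ₁ δ₂ μ : C ⊗[K] C →ₗ[K] C) :
    (IsAssocMul μ ∧ IsCovariant Δ δ₁ δ₂ μ ∧
      (∀ c d : C, ε (μ (c ⊗ₜ d)) = ε c * ε d)) ↔
    (IsCoderivation Δ δ₁ ∧
     (∀ c d : C, δ₁ (c ⊗ₜ d) - δ₂ (c ⊗ₜ d) = ε d • c - ε c • d) ∧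
     (∀ c d e : C, δ₁ (δ₁ (c ⊗ₜ d) ⊗ₜ e) - δ₁ (c ⊗ₜ δ₁ (d ⊗ₜ e)) =
        ε d • δ₁ (c ⊗ₜ e)) ∧
     (∀ c d : C, μ (c ⊗ₜ d) = ε c • d + δ₁ (c ⊗ₜ d))) := by
  constructor
  · rintro ⟨hassoc, hcov, hmul⟩
    have hleft := hcov.apply_tmul_eq_left hε hmul
    have hright := hcov.apply_tmul_eq_right hε hmul
    have hδ₁ := ((isCovariant_iff_isCoderivation hleft hright).1 hcov).1
    refine ⟨hδ₁, fun c d => ?_,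
      (isAssocMul_iff_of_apply_tmul_eq hleft (hδ₁.counit_apply_tmul hε)).1 hassoc, hleft⟩
    rw [sub_eq_sub_iff_add_eq_add, add_comm, ← hleft, hright]
  · rintro ⟨hδ₁, hsub, hassociator, hleft⟩
    have hεδ₁ := hδ₁.counit_apply_tmul hε
    have hright (c d : C) : μ (c ⊗ₜ d) = ε d • c + δ₂ (c ⊗ₜ d) := by
      rw [hleft, add_comm, ← sub_eq_sub_iff_add_eq_add, hsub]
    refine ⟨(isAssocMul_iff_of_apply_tmul_eq hleft hεδ₁).2 hassociator,
      (isCovariant_iff_isCoderivation hleft hright).2 ⟨hδ₁, hδ₁.of_sub_eq hε hsub⟩,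
      fun c d => ?_⟩
    rw [hleft, map_add, hεδ₁, add_zero, map_smul, smul_eq_mul]

/-- Corollary 4.12: `(C, δ₁, δ₂, μ)` is a counital covariant
bialgebra iff (4.16), (4.17) and `cd = ε(c)d + c∗₁d` hold. -/
theorem counital_covariant_bialgebra_iff
    (Δ : C →ₗ[K] C ⊗[K] C) (hΔ : Coassoc Δ)
    (ε : C →ₗ[K] K) (hε : IsCounit Δ ε)
    (δ₁ δ₂ : C ⊗[K] C →ₗ[K] C)
    (h1 : IsCoderivation Δ δ₁) (h2 : IsCoderivation Δ δ₂)
    (μ : C ⊗[K] C →ₗ[K] C) :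
    (IsAssocMul μ ∧ IsCovariant Δ δ₁ δ₂ μ ∧
      (∀ c d : C, ε (μ (c ⊗ₜ d)) = ε c * ε d)) ↔
    ((∀ c d : C, δ₁ (c ⊗ₜ d) - δ₂ (c ⊗ₜ d) = ε d • c - ε c • d) ∧
     (∀ c d e : C, δ₁ (δ₁ (c ⊗ₜ d) ⊗ₜ e) - δ₁ (c ⊗ₜ δ₁ (d ⊗ₜ e)) =
        ε d • δ₁ (c ⊗ₜ e)) ∧
     (∀ c d : C, μ (c ⊗ₜ d) = ε c • d + δ₁ (c ⊗ₜ d))) := by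
  exact (counital_covariant_bialgebra_iff_general Δ ε hε δ₁ δ₂ μ).trans (and_iff_right h1)

end
end
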